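/- arXiv:1907.01225 — 10 statements merged into one kernel-verified Lean document; each statement's English description precedes it below -/
import Mathlib

section
/- Let Λ : ℝ → ℝ be twice continuously differentiable with Λ'(δ) < 0 for all δ, lim_{δ→+∞} Λ(δ) = 0, and sup_{δ∈ℝ} Λ(δ)Λ''(δ)/(Λ'(δ))² < 2. Then for every p ∈ ℝ the function h_p : δ ↦ Λ(δ)(δ − p) admits a unique global maximizer δ̃*(p) on ℝ, and this maximizer is characterized by the first-order condition p = δ̃*(p) + Λ(δ̃*(p))/Λ'(δ̃*(p)). -/
/-- Hypotheses (H) on an intensity function `Λ`: twice continuously differentiable,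
decreasing with everywhere negative derivative, tending to `0` at `+∞`, and
`sup_δ Λ(δ)Λ''(δ)/(Λ'(δ))² < 2`. -/
def HypH (Λ : ℝ → ℝ) : Prop :=
  ContDiff ℝ 2 Λ ∧ StrictAnti Λ ∧ (∀ δ : ℝ, deriv Λ δ < 0) ∧
    Filter.Tendsto Λ Filter.atTop (nhds 0) ∧
    ∃ c : ℝ, c < 2 ∧ ∀ δ : ℝ, Λ δ * iteratedDeriv 2 Λ δ / (deriv Λ δ) ^ 2 ≤ c

/-- For every `p`, the function `δ ↦ Λ(δ)(δ − p)` admits a unique global maximizer on `ℝ`,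
characterized by the first-order condition `p = δ̃*(p) + Λ(δ̃*(p))/Λ'(δ̃*(p))`. -/
theorem unique_maximizer_and_first_order_condition
    (Λ : ℝ → ℝ) (hΛ : HypH Λ) (p : ℝ) :
    (∃! δs : ℝ, ∀ δ : ℝ, Λ δ * (δ - p) ≤ Λ δs * (δs - p)) ∧
    (∀ δs : ℝ, (∀ δ : ℝ, Λ δ * (δ - p) ≤ Λ δs * (δs - p)) ↔
      p = δs + Λ δs / deriv Λ δs) := by
  obtain ⟨hC, -, hneg, -, c, hc, hb⟩ := hΛ
  have hd : ∀ x, HasDerivAt Λ (deriv Λ x) x := fun x =>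
    ((hC.differentiable (by norm_num)) x).hasDerivAt
  have hC1 : ContDiff ℝ 1 (deriv Λ) := by
    have h2 : ContDiff ℝ (1 + 1) Λ := by simpa [one_add_one_eq_two] using hC
    exact (contDiff_succ_iff_deriv.1 h2).2.2
  have hd2 : ∀ x, HasDerivAt (deriv Λ) (iteratedDeriv 2 Λ x) x := fun x => by
    have h := ((hC1.differentiable (by norm_num)) x).hasDerivAt
    have e : iteratedDeriv 2 Λ x = deriv (deriv Λ) x := by
      rw [iteratedDeriv_succ, iteratedDeriv_one]
    rw [e]
    exact h
  have hg : ∀ x, HasDerivAt (fun y => y + Λ y / deriv Λ y)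
      (2 - Λ x * iteratedDeriv 2 Λ x / (deriv Λ x) ^ 2) x := fun x => by
    have hne := (hneg x).ne
    have h := (hasDerivAt_id x).add ((hd x).div (hd2 x) hne)
    refine HasDerivAt.congr_deriv h ?_
    field_simp
    ring
  obtain ⟨g, hgdef⟩ : ∃ g : ℝ → ℝ, g = fun y => y + Λ y / deriv Λ y := ⟨_, rfl⟩
  rw [← hgdef] at hg
  have hgdiff : Differentiable ℝ g := fun x => (hg x).differentiableAt
  have hlow : ∀ x y, x ≤ y → (2 - c) * (y - x) ≤ g y - g x := fun x y hxy =>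
    mul_sub_le_image_sub_of_le_deriv hgdiff
      (fun z => by rw [(hg z).deriv]; linarith [hb z]) hxy
  have hε : 0 < 2 - c := by linarith
  have hmono : StrictMono g := fun x y hxy => by
    have := hlow x y hxy.le
    nlinarith [mul_pos hε (sub_pos.2 hxy)]
  have hsurj : ∃ d, g d = p := by
    have hp : (2 - c) * (|p - g 0| / (2 - c)) = |p - g 0| := by field_simp
    have hB : 0 ≤ |p - g 0| / (2 - c) := by positivity
    obtain ⟨B, hBe⟩ : ∃ B, B = |p - g 0| / (2 - c) := ⟨_, rfl⟩
    rw [← hBe] at hp hB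
    have h1 := hlow 0 B hB
    have h2 := hlow (-B) 0 (by linarith)
    have h3 := le_abs_self (p - g 0)
    have h4 := neg_abs_le (p - g 0)
    obtain ⟨d, -, h⟩ := intermediate_value_Icc (show -B ≤ B by linarith)
      hgdiff.continuous.continuousOn
      (show p ∈ Set.Icc (g (-B)) (g B) from ⟨by linarith, by linarith⟩)
    exact ⟨d, h⟩
  have hh : ∀ x, HasDerivAt (fun y => Λ y * (y - p)) (deriv Λ x * (g x - p)) x := fun x => by
    have hne := (hneg x).ne
    have h := (hd x).mul ((hasDerivAt_id x).sub_const p)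
    refine HasDerivAt.congr_deriv h ?_
    rw [hgdef]
    simp only [id]
    field_simp
    ring
  have hhc : Continuous (fun y => Λ y * (y - p)) :=
    continuous_iff_continuousAt.2 fun x => (hh x).continuousAt
  have hmax : ∀ d, g d = p → ∀ x, Λ x * (x - p) ≤ Λ d * (d - p) := by
    intro d hdp x
    rcases le_total x d with hx | hx
    · have hm : MonotoneOn (fun y => Λ y * (y - p)) (Set.Iic d) := by
        apply monotoneOn_of_deriv_nonneg (convex_Iic d) hhc.continuousOn
        · exact fun z _ => (hh z).differentiableAt.differentiableWithinAt
        · intro z hz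
          rw [interior_Iic] at hz
          rw [(hh z).deriv]
          have := hmono (show z < d from hz)
          exact mul_nonneg_of_nonpos_of_nonpos (hneg z).le (by linarith)
      exact hm hx (Set.mem_Iic.2 le_rfl) hx
    · have hm : AntitoneOn (fun y => Λ y * (y - p)) (Set.Ici d) := by
        apply antitoneOn_of_deriv_nonpos (convex_Ici d) hhc.continuousOn
        · exact fun z _ => (hh z).differentiableAt.differentiableWithinAt
        · intro z hz
          rw [interior_Ici] at hz
          rw [(hh z).deriv]
          have := hmono (show d < z from hz)
          exact mul_nonpos_of_nonpos_of_nonneg (hneg z).le (by linarith)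
      exact hm (Set.mem_Ici.2 le_rfl) hx hx
  have hfoc : ∀ d, (∀ x, Λ x * (x - p) ≤ Λ d * (d - p)) → g d = p := by
    intro d hdm
    have hl : IsLocalMax (fun y => Λ y * (y - p)) d := Filter.Eventually.of_forall hdm
    have h0 := hl.hasDerivAt_eq_zero (hh d)
    rcases mul_eq_zero.1 h0 with h | h
    · exact absurd h (hneg d).ne
    · linarith
  obtain ⟨d, hdp⟩ := hsurj
  refine ⟨⟨d, hmax d hdp, fun y hy => hmono.injective ((hfoc y hy).trans hdp.symm)⟩, ?_⟩
  intro y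
  have e : y + Λ y / deriv Λ y = g y := by rw [hgdef]
  rw [e]
  exact ⟨fun h => (hfoc y h).symm, fun h => hmax y h.symm⟩
end

section
/- Let Λ : ℝ → ℝ satisfy hypotheses (H), and for each p ∈ ℝ let δ̃*(p) denote the unique global maximizer on ℝ of δ ↦ Λ(δ)(δ − p). Then the map p ↦ δ̃*(p) is continuously differentiable on ℝ, with derivative δ̃*'(p) = 1 / (2 − Λ(δ̃*(p))Λ''(δ̃*(p))/(Λ'(δ̃*(p)))²) > 0 for every p ∈ ℝ; in particular δ̃* is strictly increasing. -/
/-- The map `p ↦ δ̃*(p)` (unique maximizer of `δ ↦ Λ(δ)(δ−p)`) is continuously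
differentiable with positive derivative
`δ̃*'(p) = 1 / (2 − Λ(δ̃*(p))Λ''(δ̃*(p))/(Λ'(δ̃*(p)))²)`; in particular it is strictly
increasing. -/
theorem maximizer_map_contDiff_strictMono
    (Λ : ℝ → ℝ) (hΛ : HypH Λ) (δtil : ℝ → ℝ)
    (hmax : ∀ p δ : ℝ, Λ δ * (δ - p) ≤ Λ (δtil p) * (δtil p - p))
    (huniq : ∀ p δs : ℝ, (∀ δ : ℝ, Λ δ * (δ - p) ≤ Λ δs * (δs - p)) → δs = δtil p) :
    ContDiff ℝ 1 δtil ∧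
    (∀ p : ℝ,
      deriv δtil p =
        1 / (2 - Λ (δtil p) * iteratedDeriv 2 Λ (δtil p) / (deriv Λ (δtil p)) ^ 2) ∧
      0 < deriv δtil p) ∧
    StrictMono δtil := by
  obtain ⟨hC, -, hneg, -, c, hc, hcb⟩ := hΛ
  have hΛd : Differentiable ℝ Λ := hC.differentiable (by norm_num)
  have hC1 : ContDiff ℝ 1 (deriv Λ) := by
    have h : ContDiff ℝ (1 + 1) Λ := by
      have : (1 + 1 : WithTop ℕ∞) = 2 := by norm_num
      rw [this]; exact hC
    exact (contDiff_succ_iff_deriv.1 h).2.2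
  have h2 : iteratedDeriv 2 Λ = deriv (deriv Λ) := by
    rw [iteratedDeriv_succ, iteratedDeriv_one]
  have hcont2 : Continuous (iteratedDeriv 2 Λ) := by
    rw [h2]; exact hC1.continuous_deriv le_rfl
  have hd1 : Differentiable ℝ (deriv Λ) := hC1.differentiable (by norm_num)
  have hFd : ∀ δ, HasDerivAt (fun δ => δ + Λ δ / deriv Λ δ)
      (2 - Λ δ * iteratedDeriv 2 Λ δ / (deriv Λ δ) ^ 2) δ := by
    intro δ
    have hne := (hneg δ).ne
    have h := (hasDerivAt_id δ).add ((hΛd δ).hasDerivAt.div (hd1 δ).hasDerivAt hne)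
    rw [← h2] at h
    refine h.congr_deriv ?_
    field_simp
    ring
  set F : ℝ → ℝ := fun δ => δ + Λ δ / deriv Λ δ with hF
  have hpos : ∀ δ, 0 < 2 - Λ δ * iteratedDeriv 2 Λ δ / (deriv Λ δ) ^ 2 := fun δ => by
    linarith [hcb δ]
  have hFm : StrictMono F := strictMono_of_deriv_pos fun δ => by
    rw [(hFd δ).deriv]; exact hpos δ
  have hinv : ∀ p, F (δtil p) = p := by
    intro p
    have hloc : IsLocalMax (fun δ => Λ δ * (δ - p)) (δtil p) :=
      Filter.Eventually.of_forall (hmax p)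
    have h := hloc.hasDerivAt_eq_zero
      ((hΛd (δtil p)).hasDerivAt.mul ((hasDerivAt_id (δtil p)).sub_const p))
    have hne := (hneg (δtil p)).ne
    simp only [hF, id] at h ⊢
    field_simp
    linarith
  have hmono : StrictMono δtil := fun a b hab => by
    rw [← hFm.lt_iff_lt, hinv, hinv]; exact hab
  have hsurj : Function.Surjective δtil := fun δ => ⟨F δ, hFm.injective (hinv _)⟩
  have hcont : Continuous δtil := hmono.monotone.continuous_of_surjective hsurj
  have hder : ∀ p, HasDerivAt δtil
      (2 - Λ (δtil p) * iteratedDeriv 2 Λ (δtil p) / (deriv Λ (δtil p)) ^ 2)⁻¹ p := fun p =>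
    (hFd (δtil p)).of_local_left_inverse hcont.continuousAt (hpos _).ne'
      (Filter.Eventually.of_forall hinv)
  refine ⟨?_, fun p => ?_, hmono⟩
  · rw [contDiff_one_iff_deriv]
    refine ⟨fun p => (hder p).differentiableAt, ?_⟩
    rw [funext fun p => (hder p).deriv]
    refine Continuous.inv₀ ?_ fun p => (hpos _).ne'
    refine continuous_const.sub (Continuous.div ?_ ?_ fun p => pow_ne_zero 2 (hneg _).ne)
    · exact (hC.continuous.comp hcont).mul (hcont2.comp hcont)
    · exact (hC1.continuous.comp hcont).pow 2
  · rw [(hder p).deriv]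
    exact ⟨(one_div _).symm, inv_pos.2 (hpos _)⟩
end

section
/- Let Λ : ℝ → ℝ satisfy hypotheses (H) and fix p ∈ ℝ. Then the function h_p(δ) = Λ(δ)(δ − p) is increasing on (−∞, δ̃*(p)] and decreasing on [δ̃*(p), +∞), where δ̃*(p) is its unique global maximizer on ℝ. -/
/-- For fixed `p`, the function `h_p(δ) = Λ(δ)(δ − p)` is increasing on `(−∞, δ̃*(p)]`
and decreasing on `[δ̃*(p), +∞)`, where `δ̃*(p)` is its unique global maximizer. -/
theorem h_p_monotone_around_maximizer
    (Λ : ℝ → ℝ) (hΛ : HypH Λ) (p : ℝ) (δs : ℝ)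
    (hmax : ∀ δ : ℝ, Λ δ * (δ - p) ≤ Λ δs * (δs - p))
    (huniq : ∀ δ' : ℝ, (∀ δ : ℝ, Λ δ * (δ - p) ≤ Λ δ' * (δ' - p)) → δ' = δs) :
    StrictMonoOn (fun δ : ℝ => Λ δ * (δ - p)) (Set.Iic δs) ∧
    StrictAntiOn (fun δ : ℝ => Λ δ * (δ - p)) (Set.Ici δs) := by
  obtain ⟨hC, -, hneg, -, c, hc, hle⟩ := hΛ
  have hne : ∀ x, deriv Λ x ≠ 0 := fun x => (hneg x).ne
  have hd : ∀ x, HasDerivAt Λ (deriv Λ x) x := fun x =>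
    (hC.differentiable (by norm_num) x).hasDerivAt
  have hC1 : ContDiff ℝ 1 (deriv Λ) := by
    have h2 : ContDiff ℝ (1 + 1) Λ := by
      convert hC using 1
      norm_num
    exact (contDiff_succ_iff_deriv.1 h2).2.2
  have hdd : ∀ x, HasDerivAt (deriv Λ) (iteratedDeriv 2 Λ x) x := fun x => by
    have := (hC1.differentiable (by norm_num) x).hasDerivAt
    rw [iteratedDeriv_succ, iteratedDeriv_one]
    exact this
  have hg : ∀ x, HasDerivAt (fun x => (x - p) + Λ x / deriv Λ x)
      (1 + (deriv Λ x * deriv Λ x - Λ x * iteratedDeriv 2 Λ x) / (deriv Λ x) ^ 2) x := fun x =>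
    ((hasDerivAt_id x).sub_const p).add ((hd x).div (hdd x) (hne x))
  have hmono : StrictMono (fun x => (x - p) + Λ x / deriv Λ x) := by
    apply strictMono_of_deriv_pos
    intro x
    rw [(hg x).deriv, sub_div, ← pow_two, div_self (pow_ne_zero 2 (hne x))]
    linarith [hle x]
  have hh : ∀ x, HasDerivAt (fun δ : ℝ => Λ δ * (δ - p)) (deriv Λ x * (x - p) + Λ x * 1) x :=
    fun x => (hd x).mul ((hasDerivAt_id x).sub_const p)
  have hfac : ∀ x, deriv Λ x * (x - p) + Λ x * 1
      = deriv Λ x * ((x - p) + Λ x / deriv Λ x) := fun x => by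
    have := hne x
    field_simp
  have hzero : (δs - p) + Λ δs / deriv Λ δs = 0 := by
    have hloc : IsLocalMax (fun δ : ℝ => Λ δ * (δ - p)) δs := Filter.Eventually.of_forall hmax
    have h0 := hloc.hasDerivAt_eq_zero (hh δs)
    rw [hfac] at h0
    exact (mul_eq_zero.1 h0).resolve_left (hne δs)
  have hcont : Continuous (fun δ : ℝ => Λ δ * (δ - p)) :=
    continuous_iff_continuousAt.2 fun x => (hh x).continuousAt
  constructor
  · apply strictMonoOn_of_deriv_pos (convex_Iic δs) hcont.continuousOn
    intro x hx
    rw [interior_Iic] at hx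
    rw [(hh x).deriv, hfac]
    have h1 := hmono (Set.mem_Iio.1 hx)
    simp only [hzero] at h1
    exact mul_pos_of_neg_of_neg (hneg x) h1
  · apply strictAntiOn_of_deriv_neg (convex_Ici δs) hcont.continuousOn
    intro x hx
    rw [interior_Ici] at hx
    rw [(hh x).deriv, hfac]
    have h1 := hmono (Set.mem_Ioi.1 hx)
    simp only [hzero] at h1
    exact mul_neg_of_neg_of_pos (hneg x) h1
end

section
/- Let Λ : ℝ → ℝ satisfy hypotheses (H), and define H̃(p) = sup_{δ∈ℝ} Λ(δ)(δ − p) for p ∈ ℝ. Then H̃ is continuously differentiable and strictly decreasing on ℝ, with H̃'(p) = −Λ(δ̃*(p)) < 0 for all p, where δ̃*(p) is the unique maximizer of δ ↦ Λ(δ)(δ − p); consequently δ̃*(p) = Λ⁻¹(−H̃'(p)). -/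
/-- The unconstrained Hamiltonian `H̃(p) = sup_{δ∈ℝ} Λ(δ)(δ − p)`. -/
noncomputable def Htil (Λ : ℝ → ℝ) (p : ℝ) : ℝ := ⨆ δ : ℝ, Λ δ * (δ - p)

/-- `H̃` is continuously differentiable and strictly decreasing, with
`H̃'(p) = −Λ(δ̃*(p)) < 0`; consequently `δ̃*(p) = Λ⁻¹(−H̃'(p))`. -/
theorem Htil_contDiff_strictAnti_deriv
    (Λ : ℝ → ℝ) (hΛ : HypH Λ) (δtil : ℝ → ℝ)
    (hmax : ∀ p δ : ℝ, Λ δ * (δ - p) ≤ Λ (δtil p) * (δtil p - p))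
    (huniq : ∀ p δs : ℝ, (∀ δ : ℝ, Λ δ * (δ - p) ≤ Λ δs * (δs - p)) → δs = δtil p) :
    ContDiff ℝ 1 (Htil Λ) ∧ StrictAnti (Htil Λ) ∧
    ∀ p : ℝ,
      deriv (Htil Λ) p = -Λ (δtil p) ∧
      deriv (Htil Λ) p < 0 ∧
      δtil p = Function.invFun Λ (-(deriv (Htil Λ) p)) := by
  obtain ⟨hC, hanti, hneg, hlim, c, hc, hcb⟩ := hΛ
  have hpos : ∀ x, 0 < Λ x := by
    intro x
    have h1 : 0 ≤ Λ (x + 1) := by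
      refine le_of_tendsto hlim ?_
      filter_upwards [Filter.eventually_ge_atTop (x + 1)] with y hy
      exact hanti.antitone hy
    have h2 : Λ (x + 1) < Λ x := hanti (by linarith)
    linarith
  have hH : ∀ p, Htil Λ p = Λ (δtil p) * (δtil p - p) := by
    intro p
    refine le_antisymm (ciSup_le (hmax p)) ?_
    exact le_ciSup (f := fun δ => Λ δ * (δ - p)) ⟨_, by rintro _ ⟨δ, rfl⟩; exact hmax p δ⟩ (δtil p)
  have hd : ∀ x, HasDerivAt Λ (deriv Λ x) x := fun x =>
    ((hC.differentiable (by norm_num)) x).hasDerivAt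
  have hC1 : ContDiff ℝ 1 (deriv Λ) := by
    have h : ContDiff ℝ (1 + 1) Λ := by
      convert hC using 1
      norm_num
    exact (contDiff_succ_iff_deriv.1 h).2.2
  have hd2 : ∀ x, HasDerivAt (deriv Λ) (iteratedDeriv 2 Λ x) x := by
    intro x
    have := ((hC1.differentiable (by norm_num)) x).hasDerivAt
    rw [iteratedDeriv_succ, iteratedDeriv_one]
    exact this
  have hφ : ∀ x, HasDerivAt (fun x => x + Λ x / deriv Λ x)
      (1 + (deriv Λ x * deriv Λ x - Λ x * iteratedDeriv 2 Λ x) / (deriv Λ x) ^ 2) x := fun x =>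
    (hasDerivAt_id x).add ((hd x).div (hd2 x) (hneg x).ne)
  have hφd : ∀ x, 2 - c ≤ deriv (fun x => x + Λ x / deriv Λ x) x := by
    intro x
    rw [(hφ x).deriv, sub_div, ← sq, div_self (pow_ne_zero 2 (hneg x).ne)]
    linarith [hcb x]
  have hcrit : ∀ p, δtil p + Λ (δtil p) / deriv Λ (δtil p) = p := by
    intro p
    have h1 : HasDerivAt (fun x => Λ x * (x - p))
        (deriv Λ (δtil p) * (δtil p - p) + Λ (δtil p) * 1) (δtil p) :=
      (hd _).mul ((hasDerivAt_id _).sub_const p)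
    have h2 : IsLocalMax (fun x => Λ x * (x - p)) (δtil p) :=
      Filter.Eventually.of_forall (hmax p)
    have h3 := h2.hasDerivAt_eq_zero h1
    have h4 := (hneg (δtil p)).ne
    field_simp
    linarith
  have hexp : ∀ x y, x ≤ y →
      (2 - c) * (y - x) ≤ (y + Λ y / deriv Λ y) - (x + Λ x / deriv Λ x) := fun x y hxy =>
    mul_sub_le_image_sub_of_le_deriv (f := fun x => x + Λ x / deriv Λ x)
      (fun x => (hφ x).differentiableAt) hφd hxy
  have hlip : ∀ p q, |δtil p - δtil q| ≤ (2 - c)⁻¹ * |p - q| := by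
    intro p q
    rw [inv_mul_eq_div, le_div_iff₀ (by linarith)]
    rcases le_total (δtil p) (δtil q) with h | h
    · have := hexp _ _ h
      rw [hcrit, hcrit] at this
      rw [abs_of_nonpos (by linarith)]
      linarith [neg_le_abs (p - q)]
    · have := hexp _ _ h
      rw [hcrit, hcrit] at this
      rw [abs_of_nonneg (by linarith)]
      linarith [le_abs_self (p - q)]
  have hcd : Continuous δtil := by
    have : LipschitzWith (Real.toNNReal (2 - c)⁻¹) δtil := by
      refine LipschitzWith.of_dist_le' ?_
      intro p q
      simpa [Real.dist_eq] using hlip p q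
    exact this.continuous
  have hcg : Continuous fun p => Λ (δtil p) := hC.continuous.comp hcd
  have hder : ∀ p, HasDerivAt (Htil Λ) (-Λ (δtil p)) p := by
    intro p
    rw [hasDerivAt_iff_isLittleO]
    refine Asymptotics.IsLittleO.of_bound fun ε hε => ?_
    filter_upwards [Metric.continuousAt_iff'.1 hcg.continuousAt ε hε] with q hq
    rw [Real.dist_eq] at hq
    have h1 := hmax p (δtil q)
    have h2 := hmax q (δtil p)
    rw [hH, hH, Real.norm_eq_abs, Real.norm_eq_abs, smul_eq_mul]
    have h3 : |(Λ (δtil q) - Λ (δtil p)) * (q - p)| ≤ ε * |q - p| := by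
      rw [abs_mul]
      exact mul_le_mul_of_nonneg_right hq.le (abs_nonneg _)
    refine le_trans ?_ h3
    rw [← abs_neg ((Λ (δtil q) - Λ (δtil p)) * (q - p))]
    refine abs_le_abs_of_nonneg ?_ ?_ <;> nlinarith
  have hderiv : deriv (Htil Λ) = fun p => -Λ (δtil p) := funext fun p => (hder p).deriv
  refine ⟨?_, ?_, ?_⟩
  · rw [contDiff_one_iff_deriv]
    refine ⟨fun p => (hder p).differentiableAt, ?_⟩
    rw [hderiv]
    exact hcg.neg
  · refine strictAnti_of_deriv_neg fun p => ?_
    rw [hderiv]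
    exact neg_lt_zero.2 (hpos _)
  · intro p
    rw [hderiv]
    refine ⟨rfl, neg_lt_zero.2 (hpos _), ?_⟩
    simp only [neg_neg]
    exact (Function.leftInverse_invFun hanti.injective (δtil p)).symm
end

section
/- Let Λ : ℝ → ℝ satisfy hypotheses (H) and let δ∞ ≥ 0. For every p ∈ ℝ, the constrained supremum H(p) = sup_{δ ≥ −δ∞} Λ(δ)(δ − p) is attained at a unique point δ*(p), given explicitly by δ*(p) = max(δ̃*(p), −δ∞), where δ̃*(p) is the unique unconstrained maximizer of δ ↦ Λ(δ)(δ − p) on ℝ. Moreover, the map p ↦ δ*(p) is continuous and nondecreasing on ℝ. -/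
/-- The constrained supremum `H(p) = sup_{δ ≥ −δ∞} Λ(δ)(δ − p)` is attained at the unique
point `δ*(p) = max(δ̃*(p), −δ∞)`, where `δ̃*(p)` is the unconstrained maximizer; moreover
`p ↦ δ*(p)` is continuous and nondecreasing. -/
theorem constrained_maximizer_is_max_of_unconstrained
    (Λ : ℝ → ℝ) (hΛ : HypH Λ) (δinf : ℝ) (hδinf : 0 ≤ δinf) (δtil : ℝ → ℝ)
    (hmax : ∀ p δ : ℝ, Λ δ * (δ - p) ≤ Λ (δtil p) * (δtil p - p))
    (huniq : ∀ p δs : ℝ, (∀ δ : ℝ, Λ δ * (δ - p) ≤ Λ δs * (δs - p)) → δs = δtil p) :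
    (∀ p : ℝ,
      -δinf ≤ max (δtil p) (-δinf) ∧
      (∀ δ : ℝ, -δinf ≤ δ →
        Λ δ * (δ - p) ≤ Λ (max (δtil p) (-δinf)) * (max (δtil p) (-δinf) - p)) ∧
      (∀ δs : ℝ, -δinf ≤ δs →
        (∀ δ : ℝ, -δinf ≤ δ → Λ δ * (δ - p) ≤ Λ δs * (δs - p)) →
        δs = max (δtil p) (-δinf))) ∧
    Continuous (fun p : ℝ => max (δtil p) (-δinf)) ∧
    Monotone (fun p : ℝ => max (δtil p) (-δinf)) := by
  obtain ⟨hC, hanti, hneg, hlim, c, hc, hbound⟩ := hΛ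
  have hpos : ∀ x, 0 < Λ x := by
    intro x
    have h1 : 0 ≤ Λ (x + 1) := hanti.antitone.le_of_tendsto hlim (x + 1)
    have h2 : Λ (x + 1) < Λ x := hanti (by linarith)
    linarith
  have hd : ∀ x, HasDerivAt Λ (deriv Λ x) x := fun x =>
    ((hC.differentiable (by norm_num)) x).hasDerivAt
  have hdd : ∀ x, HasDerivAt (deriv Λ) (iteratedDeriv 2 Λ x) x := by
    intro x
    have h := (hC.differentiable_iteratedDeriv 1 (by norm_num)) x
    rw [iteratedDeriv_one] at h
    rw [iteratedDeriv_succ, iteratedDeriv_one]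
    exact h.hasDerivAt
  have hg : ∀ x, HasDerivAt (fun y => y + Λ y / deriv Λ y)
      (1 + (deriv Λ x * deriv Λ x - Λ x * iteratedDeriv 2 Λ x) / (deriv Λ x) ^ 2) x := fun x =>
    (hasDerivAt_id x).add ((hd x).div (hdd x) (hneg x).ne)
  have hmono : StrictMono (fun y => y + Λ y / deriv Λ y) := by
    apply strictMono_of_deriv_pos
    intro x
    rw [(hg x).deriv, sub_div, ← sq, div_self (pow_ne_zero 2 (hneg x).ne)]
    linarith [hbound x]
  have hh : ∀ p x, HasDerivAt (fun y => Λ y * (y - p)) (deriv Λ x * (x - p) + Λ x * 1) x :=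
    fun p x => (hd x).mul ((hasDerivAt_id x).sub_const p)
  have hfac : ∀ p x, deriv Λ x * (x - p) + Λ x * 1
      = deriv Λ x * ((x + Λ x / deriv Λ x) - p) := by
    intro p x
    have := (hneg x).ne
    field_simp
    ring
  have hinv : ∀ p, δtil p + Λ (δtil p) / deriv Λ (δtil p) = p := by
    intro p
    have hloc : IsLocalMax (fun y => Λ y * (y - p)) (δtil p) :=
      Filter.Eventually.of_forall (fun y => hmax p y)
    have h0 := hloc.hasDerivAt_eq_zero (hh p (δtil p))
    rw [hfac] at h0
    rcases mul_eq_zero.1 h0 with h | h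
    · exact absurd h (hneg _).ne
    · linarith
  have hsanti : ∀ p, StrictAntiOn (fun y => Λ y * (y - p)) (Set.Ici (δtil p)) := by
    intro p
    apply strictAntiOn_of_deriv_neg (convex_Ici _)
    · exact fun x _ => (hh p x).continuousAt.continuousWithinAt
    · intro x hx
      rw [interior_Ici] at hx
      rw [(hh p x).deriv, hfac]
      have h1 := hmono (Set.mem_Ioi.1 hx)
      simp only [hinv p] at h1
      exact mul_neg_of_neg_of_pos (hneg x) (by linarith)
  have htmono : Monotone δtil := by
    intro p q hpq
    apply hmono.le_iff_le.1
    simp only [hinv]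
    exact hpq
  have htsurj : Function.Surjective δtil := by
    intro x
    refine ⟨x + Λ x / deriv Λ x, hmono.injective ?_⟩
    simp only [hinv]
  have htcont : Continuous δtil := htmono.continuous_of_surjective htsurj
  refine ⟨fun p => ⟨le_max_right _ _, ?_, ?_⟩, htcont.max continuous_const,
    htmono.max monotone_const⟩
  · intro δ hδ
    rcases le_total (δtil p) (-δinf) with h | h
    · rw [max_eq_right h]
      exact (hsanti p).antitoneOn h (h.trans hδ) hδ
    · rw [max_eq_left h]
      exact hmax p δ
  · intro δs hs hall
    rcases le_total (δtil p) (-δinf) with h | h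
    · rw [max_eq_right h]
      by_contra hne
      have h1 := hsanti p h (h.trans hs) (lt_of_le_of_ne hs (Ne.symm hne))
      exact absurd (hall _ le_rfl) (not_le.2 h1)
    · rw [max_eq_left h]
      exact huniq p δs (fun δ => (hmax p δ).trans (hall _ h))
end

section
/- Let Λ : ℝ → ℝ satisfy hypotheses (H) and let δ∞ ≥ 0. Then the Hamiltonian H(p) = sup_{δ ≥ −δ∞} Λ(δ)(δ − p) is continuously differentiable and strictly decreasing on ℝ, with H'(p) = −Λ(δ*(p)) for all p ∈ ℝ, where δ*(p) is the unique maximizer of δ ↦ Λ(δ)(δ − p) over [−δ∞, +∞). In particular |H'(p)| ≤ Λ(−δ∞) for all p, so H is globally Lipschitz with Lipschitz constant Λ(−δ∞). -/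
/-- The constrained Hamiltonian `H(p) = sup_{δ ≥ −δ∞} Λ(δ)(δ − p)`. -/
noncomputable def Hcon (Λ : ℝ → ℝ) (δinf : ℝ) (p : ℝ) : ℝ :=
  ⨆ δ : {x : ℝ // -δinf ≤ x}, Λ (δ : ℝ) * ((δ : ℝ) - p)

/-- `H` is continuously differentiable and strictly decreasing with
`H'(p) = −Λ(δ*(p))`, where `δ*(p)` is the unique maximizer over `[−δ∞, +∞)`;
in particular `|H'(p)| ≤ Λ(−δ∞)` and `H` is globally Lipschitz with constant `Λ(−δ∞)`. -/
theorem Hcon_contDiff_strictAnti_lipschitz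
    (Λ : ℝ → ℝ) (hΛ : HypH Λ) (δinf : ℝ) (hδinf : 0 ≤ δinf) (δstar : ℝ → ℝ)
    (hmem : ∀ p : ℝ, -δinf ≤ δstar p)
    (hmax : ∀ p δ : ℝ, -δinf ≤ δ → Λ δ * (δ - p) ≤ Λ (δstar p) * (δstar p - p))
    (huniq : ∀ p δs : ℝ, -δinf ≤ δs →
      (∀ δ : ℝ, -δinf ≤ δ → Λ δ * (δ - p) ≤ Λ δs * (δs - p)) → δs = δstar p) :
    ContDiff ℝ 1 (Hcon Λ δinf) ∧ StrictAnti (Hcon Λ δinf) ∧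
    (∀ p : ℝ, deriv (Hcon Λ δinf) p = -Λ (δstar p)) ∧
    (∀ p : ℝ, |deriv (Hcon Λ δinf) p| ≤ Λ (-δinf)) ∧
    LipschitzWith (Real.toNNReal (Λ (-δinf))) (Hcon Λ δinf) := by
  obtain ⟨hC, hA, -, hlim, -⟩ := hΛ
  have hcont : Continuous Λ := hC.continuous
  have hpos : ∀ x, 0 < Λ x := by
    intro x
    have h1 : 0 ≤ Λ (x + 1) := hA.antitone.le_of_tendsto hlim (x + 1)
    have h2 : Λ (x + 1) < Λ x := hA (by linarith)
    linarith
  have hH : ∀ p, Hcon Λ δinf p = Λ (δstar p) * (δstar p - p) := by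
    intro p
    unfold Hcon
    haveI : Nonempty {x : ℝ // -δinf ≤ x} := ⟨⟨-δinf, le_rfl⟩⟩
    apply le_antisymm
    · exact ciSup_le fun δ => hmax p δ δ.2
    · have hb : BddAbove (Set.range fun δ : {x : ℝ // -δinf ≤ x} =>
          Λ (δ : ℝ) * ((δ : ℝ) - p)) := by
        refine ⟨Λ (δstar p) * (δstar p - p), ?_⟩
        rintro _ ⟨δ, rfl⟩
        exact hmax p δ δ.2
      exact le_ciSup hb ⟨δstar p, hmem p⟩
  have hmono : Monotone δstar := by
    intro p q hpq
    rcases hpq.eq_or_lt with h | h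
    · rw [h]
    by_contra! hlt
    have h1 := hmax p (δstar q) (hmem q)
    have h2 := hmax q (δstar p) (hmem p)
    have h3 := hA hlt
    nlinarith
  have hsc : Continuous δstar := by
    rw [continuous_iff_continuousAt]
    intro p
    refine (isCompact_Icc (a := δstar (p - 1)) (b := δstar (p + 1))).tendsto_nhds_of_unique_mapClusterPt ?_ ?_
    · filter_upwards [Icc_mem_nhds (show p - 1 < p by linarith) (show p < p + 1 by linarith)] with q hq
      exact ⟨hmono hq.1, hmono hq.2⟩
    · intro x hx hcl
      apply huniq p x ((hmem _).trans hx.1)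
      intro δ hδ
      by_contra! hlt
      have hopen : IsOpen {z : ℝ × ℝ | Λ z.1 * (z.1 - z.2) < Λ δ * (δ - z.2)} :=
        isOpen_lt (by fun_prop) (by fun_prop)
      have hm : {z : ℝ × ℝ | Λ z.1 * (z.1 - z.2) < Λ δ * (δ - z.2)} ∈ nhds (x, p) :=
        hopen.mem_nhds hlt
      obtain ⟨U, hU, V, hV, hUV⟩ := mem_nhds_prod_iff.1 hm
      obtain ⟨q, hq1, hq2⟩ := ((hcl.frequently hU).and_eventually hV).exists
      have h1 : Λ (δstar q) * (δstar q - q) < Λ δ * (δ - q) :=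
        hUV (Set.mk_mem_prod hq1 hq2)
      exact absurd (hmax q δ hδ) (not_le.2 h1)
  have hd : ∀ p, HasDerivAt (Hcon Λ δinf) (-Λ (δstar p)) p := by
    intro p
    rw [hasDerivAt_iff_isLittleO, Asymptotics.isLittleO_iff]
    intro c hc
    have ht : Continuous fun q => |Λ (δstar p) - Λ (δstar q)| := by fun_prop
    have he : ∀ᶠ q in nhds p, |Λ (δstar p) - Λ (δstar q)| < c :=
      ht.continuousAt.eventually_lt continuousAt_const (by simpa using hc)
    filter_upwards [he] with q hq
    have h1 := hmax p (δstar q) (hmem q)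
    have h2 := hmax q (δstar p) (hmem p)
    rw [hH, hH, Real.norm_eq_abs, Real.norm_eq_abs, smul_eq_mul]
    have h3 : (Λ (δstar p) - Λ (δstar q)) * (q - p) ≤ c * |q - p| := by
      refine (le_abs_self _).trans ?_
      rw [abs_mul]
      exact mul_le_mul_of_nonneg_right hq.le (abs_nonneg _)
    have h4 : 0 ≤ c * |q - p| := by positivity
    rw [abs_le]
    constructor <;> nlinarith
  have hderiv : ∀ p, deriv (Hcon Λ δinf) p = -Λ (δstar p) := fun p => (hd p).deriv
  have hdiff : Differentiable ℝ (Hcon Λ δinf) := fun p => (hd p).differentiableAt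
  have hbd : ∀ p, |deriv (Hcon Λ δinf) p| ≤ Λ (-δinf) := by
    intro p
    rw [hderiv, abs_neg, abs_of_pos (hpos _)]
    exact hA.antitone (hmem p)
  refine ⟨?_, ?_, hderiv, hbd, ?_⟩
  · rw [contDiff_one_iff_deriv]
    refine ⟨hdiff, ?_⟩
    rw [funext hderiv]
    fun_prop
  · apply strictAnti_of_deriv_neg
    intro p
    rw [hderiv]
    linarith [hpos (δstar p)]
  · apply lipschitzWith_of_nnnorm_deriv_le hdiff
    intro p
    rw [← NNReal.coe_le_coe, coe_nnnorm, Real.coe_toNNReal _ (hpos _).le]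
    exact hbd p
end

section
/- Let Λ : ℝ → ℝ satisfy hypotheses (H) and let δ∞ ≥ 0. Let p₀ ∈ ℝ be the unique point such that δ̃*(p₀) = −δ∞, where δ̃* is the (strictly increasing) map sending p to the unique unconstrained maximizer of δ ↦ Λ(δ)(δ − p). Then the constrained Hamiltonian H(p) = sup_{δ ≥ −δ∞} Λ(δ)(δ − p) satisfies: H is affine on (−∞, p₀] with H(p) = Λ(−δ∞)(−δ∞ − p) there (slope −Λ(−δ∞)), and H(p) = sup_{δ∈ℝ} Λ(δ)(δ − p) for p ≥ p₀. -/
/-- If `p₀` is the point where the unconstrained maximizer `δ̃*` hits the bound `−δ∞`,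
then `H` is affine with slope `−Λ(−δ∞)` on `(−∞, p₀]`, namely
`H(p) = Λ(−δ∞)(−δ∞ − p)` there, and `H` coincides with the unconstrained Hamiltonian
`sup_{δ∈ℝ} Λ(δ)(δ − p)` for `p ≥ p₀`. -/
theorem Hcon_affine_below_and_unconstrained_above
    (Λ : ℝ → ℝ) (hΛ : HypH Λ) (δinf : ℝ) (hδinf : 0 ≤ δinf) (δtil : ℝ → ℝ)
    (hmax : ∀ p δ : ℝ, Λ δ * (δ - p) ≤ Λ (δtil p) * (δtil p - p))
    (huniq : ∀ p δs : ℝ, (∀ δ : ℝ, Λ δ * (δ - p) ≤ Λ δs * (δs - p)) → δs = δtil p)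
    (p₀ : ℝ) (hp₀ : δtil p₀ = -δinf) :
    (∀ p : ℝ, p ≤ p₀ → Hcon Λ δinf p = Λ (-δinf) * (-δinf - p)) ∧
    (∀ p : ℝ, p₀ ≤ p → Hcon Λ δinf p = ⨆ δ : ℝ, Λ δ * (δ - p)) := by
  have hanti : StrictAnti Λ := hΛ.2.1
  constructor
  · intro p hp
    unfold Hcon
    have hb : ∀ δ : {x : ℝ // -δinf ≤ x},
        Λ (δ : ℝ) * ((δ : ℝ) - p) ≤ Λ (-δinf) * (-δinf - p) := by
      rintro ⟨δ, hδ⟩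
      have h1 := hmax p₀ δ
      rw [hp₀] at h1
      have h2 : Λ δ ≤ Λ (-δinf) := hanti.antitone hδ
      have h3 := mul_le_mul_of_nonneg_right h2 (sub_nonneg.2 hp)
      show Λ δ * (δ - p) ≤ _
      linarith
    have : Nonempty {x : ℝ // -δinf ≤ x} := ⟨⟨-δinf, le_rfl⟩⟩
    apply le_antisymm (ciSup_le hb)
    exact le_ciSup (f := fun δ : {x : ℝ // -δinf ≤ x} => Λ (δ : ℝ) * ((δ : ℝ) - p))
      ⟨_, by rintro _ ⟨δ, rfl⟩; exact hb δ⟩ ⟨-δinf, le_rfl⟩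
  · intro p hp
    have hge : -δinf ≤ δtil p := by
      by_contra hlt
      have hlt : δtil p < -δinf := not_le.1 hlt
      have h1 := hmax p₀ (δtil p)
      rw [hp₀] at h1
      have h3 := mul_le_mul_of_nonneg_right (hanti hlt).le (sub_nonneg.2 hp)
      have h4 := huniq p (-δinf) (fun δ => (hmax p δ).trans (by linarith))
      linarith
    unfold Hcon
    have : Nonempty {x : ℝ // -δinf ≤ x} := ⟨⟨-δinf, le_rfl⟩⟩
    have e1 : (⨆ δ : {x : ℝ // -δinf ≤ x}, Λ (δ : ℝ) * ((δ : ℝ) - p))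
        = Λ (δtil p) * (δtil p - p) := by
      refine le_antisymm (ciSup_le fun δ => hmax p δ) ?_
      exact le_ciSup (f := fun δ : {x : ℝ // -δinf ≤ x} => Λ (δ : ℝ) * ((δ : ℝ) - p))
        ⟨_, by rintro _ ⟨δ, rfl⟩; exact hmax p δ⟩ ⟨δtil p, hge⟩
    have e2 : (⨆ δ : ℝ, Λ δ * (δ - p)) = Λ (δtil p) * (δtil p - p) := by
      refine le_antisymm (ciSup_le fun δ => hmax p δ) ?_
      exact le_ciSup (f := fun δ : ℝ => Λ δ * (δ - p))
        ⟨_, by rintro _ ⟨δ, rfl⟩; exact hmax p δ⟩ (δtil p)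
    rw [e1, e2]
end

section
/- Let d ≥ 1, and for i = 1,…,d let H^{i,b}, H^{i,a} : ℝ → ℝ be globally Lipschitz continuous functions (with Lipschitz constants L^{i,b}, L^{i,a}), and let μ^{i,b}, μ^{i,a} be probability measures on (0,+∞). Let π : ℝᵈ → ℝ₊ be continuous and suppose there exist p ∈ ℕ* and C > 0 such that: π(q) ≤ C(1+‖q‖ᵖ) for all q; (1+π(q+y))/(1+π(q)) ≤ C(1+‖y‖ᵖ) for all q, y ∈ ℝᵈ; and ∫₀^∞ zᵖ μ^{i,b}(dz) + ∫₀^∞ zᵖ μ^{i,a}(dz) < +∞ for every i. Let ψ ∈ C_π. Then for every u ∈ C_π, the function F(u) : q ↦ ψ(q) − Σᵢ ∫₀^∞ z H^{i,b}((u(q) − u(q+z eⁱ))/z) μ^{i,b}(dz) − Σᵢ ∫₀^∞ z H^{i,a}((u(q) − u(q−z eⁱ))/z) μ^{i,a}(dz) is well defined (the integrals converge), continuous on ℝᵈ, and satisfies sup_{q∈ℝᵈ} |F(u)(q)|/(1+π(q)) < +∞; i.e. F(u) ∈ C_π. -/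
open MeasureTheory

/-- Membership in the weighted space `C_π`. -/
def InCpi {d : ℕ} (π : EuclideanSpace ℝ (Fin d) → ℝ)
    (u : EuclideanSpace ℝ (Fin d) → ℝ) : Prop :=
  Continuous u ∧ ∃ M : ℝ, ∀ q, |u q| ≤ M * (1 + π q)

/-- The operator `F` of the integro-differential Hamilton–Jacobi equation:
`F(u)(q) = ψ(q) − Σᵢ ∫ z H^{i,b}((u(q) − u(q+z eⁱ))/z) μ^{i,b}(dz)
               − Σᵢ ∫ z H^{i,a}((u(q) − u(q−z eⁱ))/z) μ^{i,a}(dz)`. -/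
noncomputable def Fop (d : ℕ) (ψ : EuclideanSpace ℝ (Fin d) → ℝ)
    (Hb Ha : Fin d → ℝ → ℝ) (μb μa : Fin d → Measure ℝ)
    (u : EuclideanSpace ℝ (Fin d) → ℝ) (q : EuclideanSpace ℝ (Fin d)) : ℝ :=
  ψ q
    - ∑ i : Fin d,
        ∫ z : ℝ, z * Hb i ((u q - u (q + z • EuclideanSpace.single i (1 : ℝ))) / z) ∂(μb i)
    - ∑ i : Fin d,
        ∫ z : ℝ, z * Ha i ((u q - u (q - z • EuclideanSpace.single i (1 : ℝ))) / z) ∂(μa i)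

theorem one_dir_aux {d : ℕ} (H : ℝ → ℝ) (L : NNReal) (hH : LipschitzWith L H)
    (μ : Measure ℝ) [IsProbabilityMeasure μ] (hμ0 : μ (Set.Iic 0) = 0)
    (π : EuclideanSpace ℝ (Fin d) → ℝ) (hπc : Continuous π) (hπ0 : ∀ q, 0 ≤ π q)
    (p : ℕ) (hp : 1 ≤ p) (C : ℝ) (hC : 0 < C)
    (hπ2 : ∀ q y : EuclideanSpace ℝ (Fin d),
      (1 + π (q + y)) / (1 + π q) ≤ C * (1 + ‖y‖ ^ p))
    (hmom : Integrable (fun z : ℝ => z ^ p) μ)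
    (u : EuclideanSpace ℝ (Fin d) → ℝ) (hu : InCpi π u)
    (e : EuclideanSpace ℝ (Fin d)) (he : ‖e‖ = 1) :
    (∀ q, Integrable (fun z : ℝ => z * H ((u q - u (q + z • e)) / z)) μ) ∧
    InCpi π (fun q => ∫ z : ℝ, z * H ((u q - u (q + z • e)) / z) ∂μ) := by
  obtain ⟨huc, M, hM⟩ := hu
  have hM0 : 0 ≤ M := by
    by_contra h
    have h1 := hM 0
    have h2 := abs_nonneg (u 0)
    have h3 := hπ0 0
    nlinarith
  set K : ℝ := |H 0| + L * (M * (1 + C)) with hK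
  have hK0 : 0 ≤ K := by positivity
  have hpos : ∀ᵐ z ∂μ, 0 < z := by
    rw [ae_iff]
    convert hμ0 using 2
    ext z
    simp
  have hbd : ∀ q, ∀ z : ℝ, 0 < z →
      ‖z * H ((u q - u (q + z • e)) / z)‖ ≤ K * (1 + π q) * (1 + z ^ p) := by
    intro q z hz
    have hzp : 0 < z ^ p := pow_pos hz p
    have hq := hπ0 q
    have hz1 : z ≤ 1 + z ^ p := by
      rcases le_total z 1 with h | h
      · linarith
      · have := le_self_pow₀ h (by omega : p ≠ 0)
        linarith
    have h2 : 1 + π (q + z • e) ≤ C * (1 + z ^ p) * (1 + π q) := by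
      have := hπ2 q (z • e)
      rw [norm_smul, he, mul_one, Real.norm_eq_abs, abs_of_pos hz,
        div_le_iff₀ (by linarith)] at this
      exact this
    have hl : |H ((u q - u (q + z • e)) / z)| ≤ |H 0| + L * (|u q - u (q + z • e)| / z) := by
      have := hH.dist_le_mul ((u q - u (q + z • e)) / z) 0
      rw [Real.dist_eq, Real.dist_eq, sub_zero, abs_div, abs_of_pos hz] at this
      have h3 := abs_sub_abs_le_abs_sub (H ((u q - u (q + z • e)) / z)) (H 0)
      linarith
    have hd : |u q - u (q + z • e)| ≤ M * (1 + C) * ((1 + π q) * (1 + z ^ p)) := by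
      have h4 := abs_sub (u q) (u (q + z • e))
      have h5 := hM q
      have h6 := hM (q + z • e)
      have h7 := mul_le_mul_of_nonneg_left h2 hM0
      have h8 : 0 ≤ M * ((1 + π q) * z ^ p) := by positivity
      nlinarith
    have hz2 : z ≤ (1 + π q) * (1 + z ^ p) := by nlinarith
    rw [Real.norm_eq_abs, abs_mul, abs_of_pos hz]
    calc z * |H ((u q - u (q + z • e)) / z)|
        ≤ z * (|H 0| + L * (|u q - u (q + z • e)| / z)) := by gcongr
      _ = |H 0| * z + L * |u q - u (q + z • e)| := by field_simp
      _ ≤ |H 0| * ((1 + π q) * (1 + z ^ p)) +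
          L * (M * (1 + C) * ((1 + π q) * (1 + z ^ p))) := by gcongr
      _ = K * (1 + π q) * (1 + z ^ p) := by rw [hK]; ring
  have hmeas : ∀ q, AEStronglyMeasurable (fun z : ℝ => z * H ((u q - u (q + z • e)) / z)) μ := by
    intro q
    have h1 : Measurable (fun z : ℝ => u (q + z • e)) :=
      (huc.comp (by fun_prop)).measurable
    exact (measurable_id.mul (hH.continuous.measurable.comp
      ((measurable_const.sub h1).div measurable_id))).aestronglyMeasurable
  have hint1 : Integrable (fun z : ℝ => 1 + z ^ p) μ := (integrable_const 1).add hmom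
  refine ⟨fun q => (hint1.const_mul (K * (1 + π q))).mono' (hmeas q)
    (hpos.mono fun z hz => hbd q z hz), ?_, K * ∫ z, (1 + z ^ p) ∂μ, ?_⟩
  · rw [continuous_iff_continuousAt]
    intro q0
    refine continuousAt_of_dominated (bound := fun z => K * (1 + (π q0 + 1)) * (1 + z ^ p))
      (Filter.Eventually.of_forall hmeas) ?_ (hint1.const_mul _) ?_
    · have hev : ∀ᶠ q in nhds q0, π q < π q0 + 1 :=
        hπc.continuousAt.eventually_lt continuousAt_const (by simp)
      filter_upwards [hev] with q hq
      filter_upwards [hpos] with z hz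
      refine (hbd q z hz).trans ?_
      have : 0 < z ^ p := pow_pos hz p
      gcongr
    · filter_upwards [hpos] with z hz
      have hHc := hH.continuous
      exact Continuous.continuousAt (by fun_prop)
  · intro q
    have h := norm_integral_le_of_norm_le (hint1.const_mul (K * (1 + π q)))
      (hpos.mono fun z hz => hbd q z hz)
    rw [integral_const_mul] at h
    rw [← Real.norm_eq_abs]
    linarith

theorem InCpi.sub_aux {d : ℕ} {π u v : EuclideanSpace ℝ (Fin d) → ℝ}
    (hu : InCpi π u) (hv : InCpi π v) : InCpi π (fun q => u q - v q) := by
  obtain ⟨hu, M, hM⟩ := hu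
  obtain ⟨hv, N, hN⟩ := hv
  refine ⟨hu.sub hv, M + N, fun q => ?_⟩
  have := abs_sub (u q) (v q)
  have := hM q
  have := hN q
  linarith

theorem InCpi.sum_aux {d : ℕ} {π : EuclideanSpace ℝ (Fin d) → ℝ}
    {f : Fin d → EuclideanSpace ℝ (Fin d) → ℝ}
    (hf : ∀ i, InCpi π (f i)) : InCpi π (fun q => ∑ i, f i q) := by
  choose hc M hM using hf
  refine ⟨continuous_finsetSum _ fun i _ => hc i, ∑ i, M i, fun q => ?_⟩
  rw [Finset.sum_mul]
  exact (Finset.abs_sum_le_sum_abs _ _).trans (Finset.sum_le_sum fun i _ => hM i q)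

/-- For every `u ∈ C_π`, `F(u)` is well defined (the integrals converge), continuous,
and belongs to `C_π`. -/
theorem Fop_maps_Cpi_to_Cpi (d : ℕ) (hd : 1 ≤ d)
    (Hb Ha : Fin d → ℝ → ℝ) (Lb La : Fin d → NNReal)
    (hHb : ∀ i, LipschitzWith (Lb i) (Hb i)) (hHa : ∀ i, LipschitzWith (La i) (Ha i))
    (μb μa : Fin d → Measure ℝ)
    [∀ i, IsProbabilityMeasure (μb i)] [∀ i, IsProbabilityMeasure (μa i)]
    (hμb0 : ∀ i, μb i (Set.Iic 0) = 0) (hμa0 : ∀ i, μa i (Set.Iic 0) = 0)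
    (π : EuclideanSpace ℝ (Fin d) → ℝ) (hπc : Continuous π) (hπ0 : ∀ q, 0 ≤ π q)
    (p : ℕ) (hp : 1 ≤ p) (C : ℝ) (hC : 0 < C)
    (hπ1 : ∀ q, π q ≤ C * (1 + ‖q‖ ^ p))
    (hπ2 : ∀ q y : EuclideanSpace ℝ (Fin d),
      (1 + π (q + y)) / (1 + π q) ≤ C * (1 + ‖y‖ ^ p))
    (hmomb : ∀ i, Integrable (fun z : ℝ => z ^ p) (μb i))
    (hmoma : ∀ i, Integrable (fun z : ℝ => z ^ p) (μa i))
    (ψ : EuclideanSpace ℝ (Fin d) → ℝ) (hψ : InCpi π ψ)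
    (u : EuclideanSpace ℝ (Fin d) → ℝ) (hu : InCpi π u) :
    (∀ (q : EuclideanSpace ℝ (Fin d)) (i : Fin d),
      Integrable
        (fun z : ℝ => z * Hb i ((u q - u (q + z • EuclideanSpace.single i (1 : ℝ))) / z))
        (μb i) ∧
      Integrable
        (fun z : ℝ => z * Ha i ((u q - u (q - z • EuclideanSpace.single i (1 : ℝ))) / z))
        (μa i)) ∧
    InCpi π (Fop d ψ Hb Ha μb μa u) := by
  have hb := fun i => one_dir_aux (Hb i) (Lb i) (hHb i) (μb i) (hμb0 i) π hπc hπ0 p hp C hC hπ2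
    (hmomb i) u hu (EuclideanSpace.single i (1 : ℝ)) (by simp)
  have ha := fun i => one_dir_aux (Ha i) (La i) (hHa i) (μa i) (hμa0 i) π hπc hπ0 p hp C hC hπ2
    (hmoma i) u hu (-EuclideanSpace.single i (1 : ℝ)) (by simp)
  simp only [smul_neg, ← sub_eq_add_neg] at ha
  exact ⟨fun q i => ⟨(hb i).1 q, (ha i).1 q⟩,
    (hψ.sub_aux (InCpi.sum_aux fun i => (hb i).2)).sub_aux (InCpi.sum_aux fun i => (ha i).2)⟩
end

section
/- Under the standing assumptions (H^{i,b}, H^{i,a} : ℝ → ℝ globally Lipschitz with constants L^{i,b}, L^{i,a}; μ^{i,b}, μ^{i,a} probability measures on (0,+∞) with finite p-th moments; π : ℝᵈ → ℝ₊ continuous with π(q) ≤ C(1+‖q‖ᵖ) and (1+π(q+y))/(1+π(q)) ≤ C(1+‖y‖ᵖ); ψ ∈ C_π), the map F : C_π → C_π defined by F(u)(q) = ψ(q) − Σᵢ ∫₀^∞ z H^{i,b}((u(q) − u(q+z eⁱ))/z) μ^{i,b}(dz) − Σᵢ ∫₀^∞ z H^{i,a}((u(q) − u(q−z eⁱ))/z)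 μ^{i,a}(dz) is Lipschitz continuous: there exists K > 0 such that ‖F(u) − F(v)‖_π ≤ K ‖u − v‖_π for all u, v ∈ C_π. -/
open MeasureTheory

/-- The weighted norm `‖u‖_π = sup_q |u(q)|/(1+π(q))`. -/
noncomputable def normPi {d : ℕ} (π : EuclideanSpace ℝ (Fin d) → ℝ)
    (u : EuclideanSpace ℝ (Fin d) → ℝ) : ℝ :=
  ⨆ q, |u q| / (1 + π q)

lemma shift_bound {d : ℕ} (π : EuclideanSpace ℝ (Fin d) → ℝ) (hπ0 : ∀ q, 0 ≤ π q)
    (p : ℕ) (C : ℝ)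
    (hπ2 : ∀ q y : EuclideanSpace ℝ (Fin d),
      (1 + π (q + y)) / (1 + π q) ≤ C * (1 + ‖y‖ ^ p))
    (e : EuclideanSpace ℝ (Fin d)) (he : ‖e‖ = 1)
    (w : EuclideanSpace ℝ (Fin d) → ℝ) (M : ℝ) (hM : ∀ q, |w q| ≤ M * (1 + π q))
    (q : EuclideanSpace ℝ (Fin d)) (z : ℝ) :
    |w q - w (q + z • e)| ≤ M * (1 + π q) * (1 + C * (1 + |z| ^ p)) := by
  have hq : 0 < 1 + π q := by linarith [hπ0 q]
  have hM0 : 0 ≤ M := by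
    by_contra h
    have h1 := hM q
    have h2 := abs_nonneg (w q)
    nlinarith
  have h := hπ2 q (z • e)
  rw [div_le_iff₀ hq, norm_smul, he, mul_one, Real.norm_eq_abs] at h
  have h1 := hM q
  have h2 := hM (q + z • e)
  have h3 := mul_le_mul_of_nonneg_left h hM0
  have h4 := abs_sub (w q) (w (q + z • e))
  linarith

lemma pert_bound (H : ℝ → ℝ) (L : NNReal) (hH : LipschitzWith L H) (a b z : ℝ) :
    |z * H (a / z) - z * H (b / z)| ≤ L * |a - b| := by
  rcases eq_or_ne z 0 with rfl | hz
  · simp; positivity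
  · have h := hH.dist_le_mul (a / z) (b / z)
    rw [Real.dist_eq, Real.dist_eq, ← sub_div, abs_div] at h
    rw [← mul_sub, abs_mul]
    have hz' : 0 < |z| := abs_pos.mpr hz
    calc |z| * |H (a / z) - H (b / z)| ≤ |z| * (L * (|a - b| / |z|)) := by gcongr
      _ = L * |a - b| := by field_simp

lemma int_moment (μ : Measure ℝ) (p : ℕ)
    (hmom : Integrable (fun z : ℝ => z ^ p) μ) : Integrable (fun z : ℝ => |z| ^ p) μ := by
  simpa [abs_pow] using hmom.norm

lemma integrable_term {d : ℕ} (H : ℝ → ℝ) (L : NNReal) (hH : LipschitzWith L H)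
    (μ : Measure ℝ) [IsProbabilityMeasure μ]
    (π : EuclideanSpace ℝ (Fin d) → ℝ) (hπ0 : ∀ q, 0 ≤ π q)
    (p : ℕ) (hp : 1 ≤ p) (C : ℝ)
    (hπ2 : ∀ q y : EuclideanSpace ℝ (Fin d),
      (1 + π (q + y)) / (1 + π q) ≤ C * (1 + ‖y‖ ^ p))
    (hmom : Integrable (fun z : ℝ => z ^ p) μ)
    (e : EuclideanSpace ℝ (Fin d)) (he : ‖e‖ = 1)
    (u : EuclideanSpace ℝ (Fin d) → ℝ) (hu : InCpi π u) (q : EuclideanSpace ℝ (Fin d)) :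
    Integrable (fun z : ℝ => z * H ((u q - u (q + z • e)) / z)) μ := by
  obtain ⟨huc, M, hM⟩ := hu
  have hI := int_moment μ p hmom
  have hB : Integrable (fun z : ℝ => (1 + |z| ^ p) * |H 0| +
      L * (M * (1 + π q) * (1 + C * (1 + |z| ^ p)))) μ := by
    have h1 : Integrable (fun z : ℝ => 1 + |z| ^ p) μ := (integrable_const _).add hI
    exact (h1.mul_const _).add
      ((((integrable_const (1 : ℝ)).add (h1.const_mul C)).const_mul _).const_mul _)
  refine hB.mono' ?_ (Filter.Eventually.of_forall fun z => ?_)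
  · have h1 : Measurable (fun z : ℝ => u (q + z • e)) :=
      (huc.comp (by fun_prop : Continuous fun z : ℝ => q + z • e)).measurable
    have h2 : Measurable H := hH.continuous.measurable
    exact (measurable_id.mul
      (h2.comp ((measurable_const.sub h1).div measurable_id))).aestronglyMeasurable
  · have h1 := pert_bound H L hH (u q - u (q + z • e)) 0 z
    have h2 := shift_bound π hπ0 p C hπ2 e he u M hM q z
    have h3 : |z| ≤ 1 + |z| ^ p := by
      rcases le_total |z| 1 with h | h
      · have : 0 ≤ |z| ^ p := by positivity
        linarith
      · have := le_self_pow₀ h (by omega : p ≠ 0)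
        linarith
    rw [zero_div, sub_zero] at h1
    rw [Real.norm_eq_abs]
    have h4 := mul_le_mul_of_nonneg_left h2 L.coe_nonneg
    have h5 := mul_le_mul_of_nonneg_right h3 (abs_nonneg (H 0))
    rw [← abs_mul] at h5
    have h6 := abs_sub_abs_le_abs_sub (z * H ((u q - u (q + z • e)) / z)) (z * H 0)
    linarith

lemma diff_term {d : ℕ} (H : ℝ → ℝ) (L : NNReal) (hH : LipschitzWith L H)
    (μ : Measure ℝ) [IsProbabilityMeasure μ]
    (π : EuclideanSpace ℝ (Fin d) → ℝ) (hπ0 : ∀ q, 0 ≤ π q)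
    (p : ℕ) (hp : 1 ≤ p) (C : ℝ)
    (hπ2 : ∀ q y : EuclideanSpace ℝ (Fin d),
      (1 + π (q + y)) / (1 + π q) ≤ C * (1 + ‖y‖ ^ p))
    (hmom : Integrable (fun z : ℝ => z ^ p) μ)
    (e : EuclideanSpace ℝ (Fin d)) (he : ‖e‖ = 1)
    (u v : EuclideanSpace ℝ (Fin d) → ℝ) (hu : InCpi π u) (hv : InCpi π v)
    (N : ℝ) (hN : ∀ q, |u q - v q| ≤ N * (1 + π q)) (q : EuclideanSpace ℝ (Fin d)) :
    |(∫ z : ℝ, z * H ((u q - u (q + z • e)) / z) ∂μ) -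
      ∫ z : ℝ, z * H ((v q - v (q + z • e)) / z) ∂μ| ≤
      (L * (1 + C * (1 + ∫ z : ℝ, |z| ^ p ∂μ))) * (N * (1 + π q)) := by
  have hI := int_moment μ p hmom
  have h1 : Integrable (fun z : ℝ => 1 + |z| ^ p) μ := (integrable_const _).add hI
  have h2 : Integrable (fun z : ℝ => 1 + C * (1 + |z| ^ p)) μ :=
    (integrable_const (1 : ℝ)).add (h1.const_mul C)
  rw [← integral_sub (integrable_term H L hH μ π hπ0 p hp C hπ2 hmom e he u hu q)
    (integrable_term H L hH μ π hπ0 p hp C hπ2 hmom e he v hv q), ← Real.norm_eq_abs]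
  have hval : ∫ z : ℝ, L * (N * (1 + π q) * (1 + C * (1 + |z| ^ p))) ∂μ =
      (L * (1 + C * (1 + ∫ z : ℝ, |z| ^ p ∂μ))) * (N * (1 + π q)) := by
    rw [integral_const_mul, integral_const_mul,
      integral_add (integrable_const _) (h1.const_mul C), integral_const_mul,
      integral_add (integrable_const _) hI]
    simp
    ring
  rw [← hval]
  refine norm_integral_le_of_norm_le ((h2.const_mul _).const_mul _)
    (Filter.Eventually.of_forall fun z => ?_)
  rw [Real.norm_eq_abs]
  refine (pert_bound H L hH _ _ z).trans ?_
  refine mul_le_mul_of_nonneg_left ?_ L.coe_nonneg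
  have := shift_bound π hπ0 p C hπ2 e he (fun q => u q - v q) N hN q z
  refine le_of_eq_of_le ?_ this
  congr 1
  ring

/-- The map `F : C_π → C_π` is Lipschitz continuous: there exists `K > 0` such that
`‖F(u) − F(v)‖_π ≤ K ‖u − v‖_π` for all `u, v ∈ C_π`. -/
theorem Fop_lipschitz (d : ℕ) (hd : 1 ≤ d)
    (Hb Ha : Fin d → ℝ → ℝ) (Lb La : Fin d → NNReal)
    (hHb : ∀ i, LipschitzWith (Lb i) (Hb i)) (hHa : ∀ i, LipschitzWith (La i) (Ha i))
    (μb μa : Fin d → Measure ℝ)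
    [∀ i, IsProbabilityMeasure (μb i)] [∀ i, IsProbabilityMeasure (μa i)]
    (hμb0 : ∀ i, μb i (Set.Iic 0) = 0) (hμa0 : ∀ i, μa i (Set.Iic 0) = 0)
    (π : EuclideanSpace ℝ (Fin d) → ℝ) (hπc : Continuous π) (hπ0 : ∀ q, 0 ≤ π q)
    (p : ℕ) (hp : 1 ≤ p) (C : ℝ) (hC : 0 < C)
    (hπ1 : ∀ q, π q ≤ C * (1 + ‖q‖ ^ p))
    (hπ2 : ∀ q y : EuclideanSpace ℝ (Fin d),
      (1 + π (q + y)) / (1 + π q) ≤ C * (1 + ‖y‖ ^ p))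
    (hmomb : ∀ i, Integrable (fun z : ℝ => z ^ p) (μb i))
    (hmoma : ∀ i, Integrable (fun z : ℝ => z ^ p) (μa i))
    (ψ : EuclideanSpace ℝ (Fin d) → ℝ) (hψ : InCpi π ψ) :
    ∃ K : ℝ, 0 < K ∧
      ∀ u v : EuclideanSpace ℝ (Fin d) → ℝ, InCpi π u → InCpi π v →
        normPi π (fun q => Fop d ψ Hb Ha μb μa u q - Fop d ψ Hb Ha μb μa v q) ≤
          K * normPi π (fun q => u q - v q) := by
  have hpos : ∀ q, 0 < 1 + π q := fun q => by linarith [hπ0 q]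
  have hmb : ∀ i, 0 ≤ ∫ z : ℝ, |z| ^ p ∂(μb i) := fun i =>
    integral_nonneg fun z => by positivity
  have hma : ∀ i, 0 ≤ ∫ z : ℝ, |z| ^ p ∂(μa i) := fun i =>
    integral_nonneg fun z => by positivity
  have hKb : 0 ≤ ∑ i, (Lb i * (1 + C * (1 + ∫ z : ℝ, |z| ^ p ∂(μb i))) : ℝ) :=
    Finset.sum_nonneg fun i _ => by have := hmb i; positivity
  have hKa : 0 ≤ ∑ i, (La i * (1 + C * (1 + ∫ z : ℝ, |z| ^ p ∂(μa i))) : ℝ) :=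
    Finset.sum_nonneg fun i _ => by have := hma i; positivity
  refine ⟨(∑ i, (Lb i * (1 + C * (1 + ∫ z : ℝ, |z| ^ p ∂(μb i))) : ℝ)) +
    (∑ i, (La i * (1 + C * (1 + ∫ z : ℝ, |z| ^ p ∂(μa i))) : ℝ)) + 1, by linarith, ?_⟩
  intro u v hu hv
  set N := normPi π (fun q => u q - v q) with hNdef
  have hbdd : BddAbove (Set.range fun q => |u q - v q| / (1 + π q)) := by
    obtain ⟨-, M1, hM1⟩ := hu
    obtain ⟨-, M2, hM2⟩ := hv
    refine ⟨M1 + M2, ?_⟩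
    rintro _ ⟨q, rfl⟩
    show |u q - v q| / (1 + π q) ≤ M1 + M2
    rw [div_le_iff₀ (hpos q)]
    have h4 := abs_sub (u q) (v q)
    linarith [hM1 q, hM2 q]
  have hN : ∀ q, |u q - v q| ≤ N * (1 + π q) := fun q => by
    rw [← div_le_iff₀ (hpos q)]
    exact le_ciSup hbdd q
  have hN0 : 0 ≤ N := Real.iSup_nonneg fun q => div_nonneg (abs_nonneg _) (hpos q).le
  refine ciSup_le fun q => ?_
  rw [div_le_iff₀ (hpos q)]
  have hb := fun i => diff_term (Hb i) (Lb i) (hHb i) (μb i) π hπ0 p hp C hπ2 (hmomb i)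
    (EuclideanSpace.single i (1 : ℝ)) (by simp) u v hu hv N hN q
  have ha := fun i => diff_term (Ha i) (La i) (hHa i) (μa i) π hπ0 p hp C hπ2 (hmoma i)
    (-EuclideanSpace.single i (1 : ℝ)) (by simp) u v hu hv N hN q
  simp only [smul_neg, ← sub_eq_add_neg] at ha
  have hB := (Finset.abs_sum_le_sum_abs _ Finset.univ).trans
    (Finset.sum_le_sum fun i (_ : i ∈ Finset.univ) => hb i)
  have hA := (Finset.abs_sum_le_sum_abs _ Finset.univ).trans
    (Finset.sum_le_sum fun i (_ : i ∈ Finset.univ) => ha i)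
  rw [← Finset.sum_mul, Finset.sum_sub_distrib] at hB hA
  have hnn : 0 ≤ N * (1 + π q) := mul_nonneg hN0 (hpos q).le
  unfold Fop
  rw [abs_le] at hB hA ⊢
  constructor <;> linarith [hB.1, hB.2, hA.1, hA.2]
end

section
/- Under the standing assumptions (H^{i,b}, H^{i,a} : ℝ → ℝ globally Lipschitz; μ^{i,b}, μ^{i,a} probability measures on (0,+∞) with finite p-th moments; π : ℝᵈ → ℝ₊ continuous with π(q) ≤ C(1+‖q‖ᵖ) and (1+π(q+y))/(1+π(q)) ≤ C(1+‖y‖ᵖ); ψ, ℓ_d ∈ C_π), for every T > 0 there exists a unique continuously differentiable curve W : [0,T] → C_π satisfying the terminal value problem W'(t) = F(W(t)) for all t ∈ [0,T] and W(T) = −ℓ_d, where F(u)(q) = ψ(q) − Σᵢ ∫₀^∞ z H^{i,b}((u(q) − u(q+z eⁱ))/z) μ^{i,b}(dz) − Σᵢ ∫₀^∞ z H^{i,a}((u(q) − u(q−z eⁱ))/z) μ^{i,a}(dz). Equivalently, w(t,q) = W(t)(q) is the unique classical solution (in the class C¹([0,T], C_π)) of the integro-differential Hamilton–Jacobi equation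 0 = ∂_t w(t,q) − ψ(q) + Σᵢ ∫₀^∞ z H^{i,b}((w(t,q) − w(t,q+z eⁱ))/z) μ^{i,b}(dz) + Σᵢ ∫₀^∞ z H^{i,a}((w(t,q) − w(t,q−z eⁱ))/z) μ^{i,a}(dz) with terminal condition w(T,q) = −ℓ_d(q) for all q ∈ ℝᵈ. -/
open MeasureTheory

/-- `w : [0,T] → C_π` is a classical (`C¹([0,T], C_π)`) solution of the terminal value
problem `W'(t) = F(W(t))`, `W(T) = −ℓ_d`, i.e. of the integro-differential
Hamilton–Jacobi equation (3) of the paper: for every `t ∈ [0,T]`, `w(t,·) ∈ C_π`, the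
difference quotients `(w(s,·) − w(t,·))/(s−t)` converge to `F(w(t,·))` in `‖·‖_π` as
`s → t` in `[0,T]`, and `w(T,·) = −ℓ_d`. -/
def IsHJSolution (d : ℕ) (T : ℝ) (π ψ ℓd : EuclideanSpace ℝ (Fin d) → ℝ)
    (Hb Ha : Fin d → ℝ → ℝ) (μb μa : Fin d → Measure ℝ)
    (w : ℝ → EuclideanSpace ℝ (Fin d) → ℝ) : Prop :=
  (∀ t ∈ Set.Icc (0 : ℝ) T, InCpi π (w t)) ∧
  (∀ t ∈ Set.Icc (0 : ℝ) T,
    Filter.Tendsto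
      (fun s : ℝ =>
        normPi π (fun q => (w s q - w t q) / (s - t) - Fop d ψ Hb Ha μb μa (w t) q))
      (nhdsWithin t (Set.Icc (0 : ℝ) T \ {t})) (nhds 0)) ∧
  (∀ q, w T q = -ℓd q)

section Helpers

open Set Filter Topology BoundedContinuousFunction

section ODE

variable {E : Type*} [NormedAddCommGroup E] [NormedSpace ℝ E]

/-- The Picard map on continuous curves on `[0,T]`. -/
noncomputable def picardMap (f : E → E) {K : NNReal} (hf : LipschitzWith K f) (x₀ : E) {T : ℝ}
    (hT : 0 ≤ T) (α : C(Icc (0 : ℝ) T, E)) : C(Icc (0 : ℝ) T, E) where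
  toFun t := x₀ + ∫ τ in (0 : ℝ)..t, f (IccExtend hT α τ)
  continuous_toFun := by
    have hc : Continuous fun τ => f (IccExtend hT α τ) :=
      hf.continuous.comp (α.continuous.Icc_extend' )
    have := intervalIntegral.continuous_primitive (μ := volume) (fun a b => hc.intervalIntegrable a b) 0
    exact continuous_const.add (this.comp continuous_subtype_val)

lemma picardMap_iterate (f : E → E) {K : NNReal} (hf : LipschitzWith K f) (x₀ : E) {T : ℝ}
    (hT : 0 ≤ T) (α β : C(Icc (0 : ℝ) T, E)) (n : ℕ) (t : Icc (0 : ℝ) T) :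
    dist ((picardMap f hf x₀ hT)^[n] α t) ((picardMap f hf x₀ hT)^[n] β t) ≤
      (K * t.1) ^ n / n.factorial * dist α β := by
  induction n generalizing t with
  | zero => simpa using ContinuousMap.dist_apply_le_dist (f := α) (g := β) t
  | succ n ih =>
    rw [Function.iterate_succ_apply', Function.iterate_succ_apply']
    set a := (picardMap f hf x₀ hT)^[n] α
    set b := (picardMap f hf x₀ hT)^[n] β
    have ca : Continuous fun τ => f (IccExtend hT a τ) :=
      hf.continuous.comp (a.continuous.Icc_extend')
    have cb : Continuous fun τ => f (IccExtend hT b τ) :=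
      hf.continuous.comp (b.continuous.Icc_extend')
    change dist (x₀ + ∫ τ in (0 : ℝ)..t, f (IccExtend hT a τ))
      (x₀ + ∫ τ in (0 : ℝ)..t, f (IccExtend hT b τ)) ≤ _
    rw [dist_add_left, dist_eq_norm, ← intervalIntegral.integral_sub (ca.intervalIntegrable _ _)
      (cb.intervalIntegrable _ _)]
    have h1 : ‖∫ τ in (0 : ℝ)..t, (f (IccExtend hT a τ) - f (IccExtend hT b τ))‖ ≤
        ∫ τ in (0 : ℝ)..t, (K : ℝ) * ((K * τ) ^ n / n.factorial * dist α β) := by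
      apply intervalIntegral.norm_integral_le_of_norm_le t.2.1
      · refine Eventually.of_forall fun τ hτ => ?_
        have hm : τ ∈ Icc (0 : ℝ) T := ⟨hτ.1.le, hτ.2.trans t.2.2⟩
        rw [IccExtend_of_mem _ _ hm, IccExtend_of_mem _ _ hm, ← dist_eq_norm]
        refine (hf.dist_le_mul _ _).trans ?_
        exact mul_le_mul_of_nonneg_left (ih ⟨τ, hm⟩) K.2
      · exact Continuous.intervalIntegrable (by fun_prop) _ _
    refine h1.trans (le_of_eq ?_)
    have h2 : ∀ τ : ℝ, (K : ℝ) * ((K * τ) ^ n / n.factorial * dist α β) =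
        (K ^ (n + 1) / n.factorial * dist α β) * τ ^ n := by
      intro τ; rw [mul_pow]; ring
    simp_rw [h2]
    rw [intervalIntegral.integral_const_mul, integral_pow, Nat.factorial_succ, mul_pow]
    push_cast
    have : (n.factorial : ℝ) ≠ 0 := by positivity
    have : (n : ℝ) + 1 ≠ 0 := by positivity
    field_simp
    simp

lemma exists_global_ode [CompleteSpace E] (f : E → E) {K : NNReal} (hf : LipschitzWith K f)
    (x₀ : E) {T : ℝ} (hT : 0 ≤ T) :
    ∃ x : ℝ → E, x 0 = x₀ ∧ ∀ t ∈ Icc (0 : ℝ) T, HasDerivAt x (f (x t)) t := by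
  obtain ⟨n, hn⟩ := (FloorSemiring.tendsto_pow_div_factorial_atTop (K * T)
    |>.eventually (gt_mem_nhds zero_lt_one)).exists
  have h0 : (0 : ℝ) ≤ (K * T) ^ n / n.factorial := by positivity
  have hc : ContractingWith ⟨_, h0⟩ (picardMap f hf x₀ hT)^[n] := by
    refine ⟨hn, LipschitzWith.of_dist_le_mul fun α β => ?_⟩
    rw [ContinuousMap.dist_le (by positivity)]
    intro t
    refine (picardMap_iterate f hf x₀ hT α β n t).trans ?_
    have h1 := t.2.1
    have h2 := t.2.2
    change _ ≤ (K * T) ^ n / n.factorial * dist α β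
    gcongr
  have hfix := hc.isFixedPt_fixedPoint_iterate
  set α := hc.fixedPoint
  have ca : Continuous fun τ => f (IccExtend hT α τ) :=
      hf.continuous.comp (α.continuous.Icc_extend')
  refine ⟨fun t => x₀ + ∫ τ in (0 : ℝ)..t, f (IccExtend hT α τ), by simp, fun t ht => ?_⟩
  have h1 := ((ca.integral_hasStrictDerivAt 0 t).hasDerivAt).const_add x₀
  convert h1 using 2
  have := congrArg (fun g : C(Icc (0 : ℝ) T, E) => g ⟨t, ht⟩) hfix
  rw [IccExtend_of_mem _ _ ht]
  exact this

lemma exists_global_ode_terminal [CompleteSpace E] (f : E → E) {K : NNReal}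
    (hf : LipschitzWith K f) (x₀ : E) {T : ℝ} (hT : 0 ≤ T) :
    ∃ x : ℝ → E, x T = x₀ ∧ ∀ t ∈ Icc (0 : ℝ) T, HasDerivAt x (f (x t)) t := by
  have hf' : LipschitzWith K fun x => - f x := fun x y => by
    simpa [edist_neg_neg] using hf x y
  obtain ⟨x, hx0, hx⟩ := exists_global_ode (fun x => - f x) hf' x₀ hT
  refine ⟨fun t => x (T - t), by simpa using hx0, fun t ht => ?_⟩
  have h1 := hx (T - t) ⟨by linarith [ht.2], by linarith [ht.1]⟩
  have h2 := h1.scomp t ((hasDerivAt_id t).const_sub T)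
  simpa [Function.comp_def] using h2

lemma unique_ode_terminal (f : E → E) {K : NNReal}
    (hf : LipschitzWith K f) {T : ℝ} (x y : ℝ → E)
    (hx : ∀ t ∈ Icc (0 : ℝ) T, HasDerivWithinAt x (f (x t)) (Icc 0 T) t)
    (hy : ∀ t ∈ Icc (0 : ℝ) T, HasDerivWithinAt y (f (y t)) (Icc 0 T) t)
    (hxy : x T = y T) : EqOn x y (Icc 0 T) := by
  refine ODE_solution_unique_of_mem_Icc_left (v := fun _ => f) (s := fun _ => univ) (K := K)
    (fun t _ => hf.lipschitzOnWith) (fun t ht => (hx t ht).continuousWithinAt) ?_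
    (fun _ _ => mem_univ _) (fun t ht => (hy t ht).continuousWithinAt) ?_
    (fun _ _ => mem_univ _) hxy
  · intro t ht
    exact (hx t ⟨ht.1.le, ht.2⟩).mono_of_mem_nhdsWithin (Icc_mem_nhdsLE_of_mem ht)
  · intro t ht
    exact (hy t ⟨ht.1.le, ht.2⟩).mono_of_mem_nhdsWithin (Icc_mem_nhdsLE_of_mem ht)

end ODE

section Abstract

variable {d : ℕ} {π : EuclideanSpace ℝ (Fin d) → ℝ}

/-- The bounded continuous function `u/(1+π)`. -/
noncomputable def toBdd (hπc : Continuous π) (hπ0 : ∀ q, 0 ≤ π q)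
    (u : EuclideanSpace ℝ (Fin d) → ℝ) (hu : InCpi π u) : EuclideanSpace ℝ (Fin d) →ᵇ ℝ :=
  ofNormedAddCommGroup (fun q => u q / (1 + π q))
    (hu.1.div (continuous_const.add hπc) fun q => by have := hπ0 q; positivity)
    hu.2.choose fun q => by
      have h := hu.2.choose_spec q
      have := hπ0 q
      rw [Real.norm_eq_abs, abs_div, abs_of_pos (by positivity : 0 < 1 + π q),
        div_le_iff₀ (by positivity)]
      exact h

lemma inCpi_mul (hπc : Continuous π) (hπ0 : ∀ q, 0 ≤ π q)
    (v : EuclideanSpace ℝ (Fin d) →ᵇ ℝ) : InCpi π (fun q => v q * (1 + π q)) := by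
  refine ⟨v.continuous.mul (continuous_const.add hπc), ‖v‖, fun q => ?_⟩
  have := hπ0 q
  rw [abs_mul, abs_of_pos (by positivity : 0 < 1 + π q)]
  exact mul_le_mul_of_nonneg_right (v.norm_coe_le_norm q) (by positivity)

lemma norm_eq_normPi (hπ0 : ∀ q, 0 ≤ π q)
    (v : EuclideanSpace ℝ (Fin d) →ᵇ ℝ) (u : EuclideanSpace ℝ (Fin d) → ℝ)
    (h : ∀ q, u q = v q * (1 + π q)) : normPi π u = ‖v‖ := by
  rw [v.norm_eq_iSup_norm, normPi]
  congr 1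
  ext q
  have := hπ0 q
  rw [h, abs_mul, abs_of_pos (by positivity : 0 < 1 + π q), Real.norm_eq_abs]
  field_simp

/-- Abstract version. -/
lemma abstract_exists_unique (hπc : Continuous π) (hπ0 : ∀ q, 0 ≤ π q)
    (Φ : (EuclideanSpace ℝ (Fin d) → ℝ) → (EuclideanSpace ℝ (Fin d) → ℝ))
    (hΦ : ∀ u, InCpi π u → InCpi π (Φ u))
    (K : NNReal)
    (hlip : ∀ u v, InCpi π u → InCpi π v → ∀ D : ℝ, 0 ≤ D →
      (∀ q, |u q - v q| ≤ D * (1 + π q)) → ∀ q, |Φ u q - Φ v q| ≤ K * D * (1 + π q))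
    (ℓ : EuclideanSpace ℝ (Fin d) → ℝ) (hℓ : InCpi π ℓ) (T : ℝ) (hT : 0 < T) :
    ∃ w : ℝ → EuclideanSpace ℝ (Fin d) → ℝ,
      ((∀ t ∈ Icc (0 : ℝ) T, InCpi π (w t)) ∧
        (∀ t ∈ Icc (0 : ℝ) T, Tendsto
          (fun s : ℝ => normPi π (fun q => (w s q - w t q) / (s - t) - Φ (w t) q))
          (𝓝[Icc (0 : ℝ) T \ {t}] t) (𝓝 0)) ∧ (∀ q, w T q = ℓ q)) ∧
      ∀ w' : ℝ → EuclideanSpace ℝ (Fin d) → ℝ,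
        ((∀ t ∈ Icc (0 : ℝ) T, InCpi π (w' t)) ∧
        (∀ t ∈ Icc (0 : ℝ) T, Tendsto
          (fun s : ℝ => normPi π (fun q => (w' s q - w' t q) / (s - t) - Φ (w' t) q))
          (𝓝[Icc (0 : ℝ) T \ {t}] t) (𝓝 0)) ∧ (∀ q, w' T q = ℓ q)) →
        ∀ t ∈ Icc (0 : ℝ) T, ∀ q, w' t q = w t q := by
  have hpos : ∀ q, 0 < 1 + π q := fun q => by have := hπ0 q; positivity
  set G : (EuclideanSpace ℝ (Fin d) →ᵇ ℝ) → (EuclideanSpace ℝ (Fin d) →ᵇ ℝ) := fun v =>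
    toBdd hπc hπ0 _ (hΦ _ (inCpi_mul hπc hπ0 v)) with hG
  have hGa : ∀ v q, G v q * (1 + π q) = Φ (fun q => v q * (1 + π q)) q := by
    intro v q
    exact div_mul_cancel₀ _ (hpos q).ne'
  have hGlip : LipschitzWith K G := by
    refine LipschitzWith.of_dist_le_mul fun v v' => ?_
    rw [BoundedContinuousFunction.dist_le (by positivity)]
    intro q
    have h := hlip _ _ (inCpi_mul hπc hπ0 v) (inCpi_mul hπc hπ0 v') (dist v v') dist_nonneg
      (fun q => by
        rw [← sub_mul, abs_mul, abs_of_pos (hpos q)]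
        exact mul_le_mul_of_nonneg_right (by
          rw [← Real.dist_eq]; exact BoundedContinuousFunction.dist_coe_le_dist q)
          (hpos q).le) q
    rw [← hGa, ← hGa, ← sub_mul, abs_mul, abs_of_pos (hpos q)] at h
    exact le_of_mul_le_mul_right h (hpos q)
  have key : ∀ (x : ℝ → (EuclideanSpace ℝ (Fin d) →ᵇ ℝ))
      (w : ℝ → EuclideanSpace ℝ (Fin d) → ℝ),
      (∀ t ∈ Icc (0 : ℝ) T, ∀ q, w t q = x t q * (1 + π q)) → ∀ t ∈ Icc (0 : ℝ) T,
      (HasDerivWithinAt x (G (x t)) (Icc 0 T) t ↔ Tendsto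
          (fun s : ℝ => normPi π (fun q => (w s q - w t q) / (s - t) - Φ (w t) q))
          (𝓝[Icc (0 : ℝ) T \ {t}] t) (𝓝 0)) := by
    intro x w hxw t ht
    rw [hasDerivWithinAt_iff_tendsto_slope, tendsto_iff_norm_sub_tendsto_zero]
    apply tendsto_congr'
    filter_upwards [self_mem_nhdsWithin] with s hs
    symm
    apply norm_eq_normPi hπ0
    intro q
    have hwt : w t = fun q => x t q * (1 + π q) := funext (hxw t ht)
    rw [hxw s hs.1, hwt, ← hGa]
    simp only [slope_def_module, BoundedContinuousFunction.coe_sub,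
      BoundedContinuousFunction.coe_smul, Pi.sub_apply, smul_eq_mul]
    ring
  obtain ⟨x, hxT, hx⟩ := exists_global_ode_terminal G hGlip (toBdd hπc hπ0 ℓ hℓ) hT.le
  refine ⟨fun t q => x t q * (1 + π q), ⟨fun t _ => inCpi_mul hπc hπ0 _, fun t ht => ?_,
    fun q => ?_⟩, ?_⟩
  · exact (key x _ (fun _ _ _ => rfl) t ht).1 (hx t ht).hasDerivWithinAt
  · simp only [hxT]
    exact div_mul_cancel₀ _ (hpos q).ne'
  · rintro w' ⟨h1, h2, h3⟩ t ht q
    classical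
    let y : ℝ → (EuclideanSpace ℝ (Fin d) →ᵇ ℝ) := fun t =>
      if h : t ∈ Icc (0 : ℝ) T then toBdd hπc hπ0 (w' t) (h1 t h) else 0
    have hy : ∀ t ∈ Icc (0 : ℝ) T, ∀ q, w' t q = y t q * (1 + π q) := by
      intro t ht q
      simp only [y, dif_pos ht]
      exact (div_mul_cancel₀ _ (hpos q).ne').symm
    have hTm : T ∈ Icc (0 : ℝ) T := ⟨hT.le, le_rfl⟩
    have := unique_ode_terminal G hGlip y x
      (fun t ht => (key y w' hy t ht).2 (h2 t ht)) (fun t ht => (hx t ht).hasDerivWithinAt)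
      (by
        rw [hxT]
        ext q
        have e1 := hy T hTm q
        rw [h3 q] at e1
        exact eq_div_of_mul_eq (hpos q).ne' e1.symm)
    rw [hy t ht q, this ht]

end Abstract

section Integral

variable {d : ℕ} {π : EuclideanSpace ℝ (Fin d) → ℝ}

/-- The integrand of a single jump term, in direction `e`. -/
noncomputable def jInt (H : ℝ → ℝ) (e : EuclideanSpace ℝ (Fin d))
    (u : EuclideanSpace ℝ (Fin d) → ℝ) (q : EuclideanSpace ℝ (Fin d)) (z : ℝ) : ℝ :=
  z * H ((u q - u (q + z • e)) / z)

lemma jInt_meas {H : ℝ → ℝ} (hH : Continuous H) (e : EuclideanSpace ℝ (Fin d))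
    {u : EuclideanSpace ℝ (Fin d) → ℝ} (hu : Continuous u) (q : EuclideanSpace ℝ (Fin d))
    (μ : Measure ℝ) : AEStronglyMeasurable (jInt H e u q) μ := by
  apply Measurable.aestronglyMeasurable
  have h1 : Measurable fun z : ℝ => u q - u (q + z • e) :=
    Continuous.measurable (by fun_prop)
  exact measurable_id.mul (hH.measurable.comp (h1.div measurable_id))

lemma jInt_diff {H : ℝ → ℝ} {L : NNReal} (hH : LipschitzWith L H)
    (hπ0 : ∀ q, 0 ≤ π q) {p : ℕ} {C : ℝ}
    (hπ2 : ∀ q y : EuclideanSpace ℝ (Fin d),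
      (1 + π (q + y)) / (1 + π q) ≤ C * (1 + ‖y‖ ^ p))
    {e : EuclideanSpace ℝ (Fin d)} (he : ‖e‖ = 1)
    {u v : EuclideanSpace ℝ (Fin d) → ℝ} {D : ℝ} (hD : 0 ≤ D)
    (huv : ∀ q, |u q - v q| ≤ D * (1 + π q)) (q : EuclideanSpace ℝ (Fin d)) {z : ℝ}
    (hz : 0 < z) :
    |jInt H e u q z - jInt H e v q z| ≤ L * D * (1 + π q) * (1 + C * (1 + z ^ p)) := by
  have hpos : 0 < 1 + π q := by have := hπ0 q; positivity
  have h1 := hπ2 q (z • e)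
  rw [norm_smul, he, mul_one, Real.norm_eq_abs, abs_of_pos hz, div_le_iff₀ hpos] at h1
  have h2 := huv q
  have h3 := (huv (q + z • e)).trans (mul_le_mul_of_nonneg_left h1 hD)
  have h4 := hH.dist_le_mul ((u q - u (q + z • e)) / z) ((v q - v (q + z • e)) / z)
  rw [Real.dist_eq, Real.dist_eq, ← sub_div, abs_div, abs_of_pos hz] at h4
  unfold jInt
  rw [← mul_sub, abs_mul, abs_of_pos hz]
  calc _ ≤ z * (L * (|u q - u (q + z • e) - (v q - v (q + z • e))| / z)) :=
        mul_le_mul_of_nonneg_left h4 hz.le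
    _ = L * |(u q - v q) - (u (q + z • e) - v (q + z • e))| := by
        rw [show u q - u (q + z • e) - (v q - v (q + z • e)) =
          (u q - v q) - (u (q + z • e) - v (q + z • e)) by ring]
        field_simp
    _ ≤ L * (|u q - v q| + |u (q + z • e) - v (q + z • e)|) :=
        mul_le_mul_of_nonneg_left (abs_sub _ _) L.2
    _ ≤ L * (D * (1 + π q) + D * (C * (1 + z ^ p) * (1 + π q))) :=
        mul_le_mul_of_nonneg_left (add_le_add h2 h3) L.2
    _ = _ := by ring

lemma jInt_zero (H : ℝ → ℝ) (e : EuclideanSpace ℝ (Fin d)) (q : EuclideanSpace ℝ (Fin d)) (z : ℝ) :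
    jInt H e (fun _ => 0) q z = z * H 0 := by simp [jInt]

lemma jInt_bound {H : ℝ → ℝ} {L : NNReal} (hH : LipschitzWith L H)
    (hπ0 : ∀ q, 0 ≤ π q) {p : ℕ} (hp : 1 ≤ p) {C : ℝ}
    (hπ2 : ∀ q y : EuclideanSpace ℝ (Fin d),
      (1 + π (q + y)) / (1 + π q) ≤ C * (1 + ‖y‖ ^ p))
    {e : EuclideanSpace ℝ (Fin d)} (he : ‖e‖ = 1)
    {u : EuclideanSpace ℝ (Fin d) → ℝ} {D : ℝ} (hD : 0 ≤ D)
    (hu : ∀ q, |u q| ≤ D * (1 + π q)) (q : EuclideanSpace ℝ (Fin d)) {z : ℝ}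
    (hz : 0 < z) :
    |jInt H e u q z| ≤
      (1 + π q) * (L * D * (1 + C * (1 + z ^ p)) + |H 0| * (1 + z ^ p)) := by
  have h := jInt_diff hH hπ0 hπ2 he hD (u := u) (v := fun _ => 0) (by simpa using hu) q hz
  rw [jInt_zero] at h
  have hz' : z ≤ 1 + z ^ p := by
    rcases le_total z 1 with h1 | h1
    · have := pow_nonneg hz.le p; linarith
    · have := le_self_pow₀ h1 (by omega : p ≠ 0); linarith
  have h2 : |z * H 0| ≤ (1 + π q) * (|H 0| * (1 + z ^ p)) := by
    rw [abs_mul, abs_of_pos hz]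
    have h3 : z * |H 0| ≤ |H 0| * (1 + z ^ p) := by
      rw [mul_comm]; exact mul_le_mul_of_nonneg_left hz' (abs_nonneg _)
    have h4 : 0 ≤ |H 0| * (1 + z ^ p) := by positivity
    nlinarith [hπ0 q, mul_nonneg (hπ0 q) h4]
  have h5 := abs_add_le (jInt H e u q z - z * H 0) (z * H 0)
  rw [sub_add_cancel] at h5
  linarith

lemma ae_pos {μ : Measure ℝ} (hμ0 : μ (Iic 0) = 0) : ∀ᵐ z ∂μ, 0 < z := by
  rw [ae_iff]
  convert hμ0 using 2
  ext z; simp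

/-- All needed facts on a single jump term. -/
lemma jump_facts {H : ℝ → ℝ} {L : NNReal} (hH : LipschitzWith L H)
    {μ : Measure ℝ} [IsProbabilityMeasure μ] (hμ0 : μ (Iic 0) = 0)
    (hπc : Continuous π) (hπ0 : ∀ q, 0 ≤ π q) {p : ℕ} (hp : 1 ≤ p) {C : ℝ} (hC : 0 < C)
    (hπ2 : ∀ q y : EuclideanSpace ℝ (Fin d),
      (1 + π (q + y)) / (1 + π q) ≤ C * (1 + ‖y‖ ^ p))
    (hmom : Integrable (fun z : ℝ => z ^ p) μ)
    {e : EuclideanSpace ℝ (Fin d)} (he : ‖e‖ = 1) :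
    (∀ u, InCpi π u → InCpi π (fun q => ∫ z, jInt H e u q z ∂μ)) ∧
    ∃ K : NNReal, ∀ u v, InCpi π u → InCpi π v → ∀ D : ℝ, 0 ≤ D →
      (∀ q, |u q - v q| ≤ D * (1 + π q)) →
      ∀ q, |(∫ z, jInt H e u q z ∂μ) - ∫ z, jInt H e v q z ∂μ| ≤ K * D * (1 + π q) := by
  have hae := ae_pos hμ0
  have hi1 : Integrable (fun z : ℝ => 1 + z ^ p) μ := (integrable_const _).add hmom
  have hi2 : Integrable (fun z : ℝ => 1 + C * (1 + z ^ p)) μ :=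
    (integrable_const _).add (hi1.const_mul C)
  have hi3 : ∀ D : ℝ, Integrable
      (fun z : ℝ => L * D * (1 + C * (1 + z ^ p)) + |H 0| * (1 + z ^ p)) μ := fun D =>
    (hi2.const_mul _).add (hi1.const_mul _)
  have hex : ∀ u, InCpi π u → ∃ D : ℝ, 0 ≤ D ∧ ∀ q, |u q| ≤ D * (1 + π q) := by
    rintro u ⟨-, M, hM⟩
    refine ⟨|M|, abs_nonneg _, fun q => (hM q).trans ?_⟩
    exact mul_le_mul_of_nonneg_right (le_abs_self M) (by have := hπ0 q; positivity)
  have hint : ∀ u, InCpi π u → ∀ q, Integrable (jInt H e u q) μ := by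
    intro u hu q
    obtain ⟨D, hD, hDu⟩ := hex u hu
    refine ((hi3 D).const_mul (1 + π q)).mono' (jInt_meas hH.continuous e hu.1 q μ) ?_
    filter_upwards [hae] with z hz
    exact jInt_bound hH hπ0 hp hπ2 he hD hDu q hz
  refine ⟨fun u hu => ⟨?_, ?_⟩, ?_⟩
  · obtain ⟨D, hD, hDu⟩ := hex u hu
    rw [continuous_iff_continuousAt]
    intro q₀
    refine continuousAt_of_dominated (bound := fun z => (1 + (π q₀ + 1)) *
      (L * D * (1 + C * (1 + z ^ p)) + |H 0| * (1 + z ^ p)))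
      (Eventually.of_forall fun q => jInt_meas hH.continuous e hu.1 q μ) ?_
      ((hi3 D).const_mul _) ?_
    · have : ∀ᶠ q in 𝓝 q₀, π q < π q₀ + 1 :=
        hπc.continuousAt.eventually (gt_mem_nhds (by linarith))
      filter_upwards [this] with q hq
      filter_upwards [hae] with z hz
      refine (jInt_bound hH hπ0 hp hπ2 he hD hDu q hz).trans ?_
      exact mul_le_mul_of_nonneg_right (by linarith) (by positivity)
    · refine Eventually.of_forall fun z => ?_
      have hc := hu.1
      have hc' := hH.continuous
      unfold jInt
      exact Continuous.continuousAt (by fun_prop)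
  · obtain ⟨D, hD, hDu⟩ := hex u hu
    refine ⟨∫ z, (L * D * (1 + C * (1 + z ^ p)) + |H 0| * (1 + z ^ p)) ∂μ, fun q => ?_⟩
    rw [mul_comm, ← integral_const_mul, ← Real.norm_eq_abs]
    refine norm_integral_le_of_norm_le ((hi3 D).const_mul _) ?_
    filter_upwards [hae] with z hz
    exact jInt_bound hH hπ0 hp hπ2 he hD hDu q hz
  · have hK : 0 ≤ L * ∫ z, (1 + C * (1 + z ^ p)) ∂μ := by
      refine mul_nonneg L.2 (integral_nonneg_of_ae ?_)
      filter_upwards [hae] with z hz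
      simp only [Pi.zero_apply]
      positivity
    refine ⟨⟨_, hK⟩, fun u v hu hv D hD huv q => ?_⟩
    rw [← integral_sub (hint u hu q) (hint v hv q), ← Real.norm_eq_abs]
    have h1 : (L * ∫ z, (1 + C * (1 + z ^ p)) ∂μ) * D * (1 + π q) =
        ∫ z, L * D * (1 + π q) * (1 + C * (1 + z ^ p)) ∂μ := by
      rw [integral_const_mul]
      ring
    refine le_trans ?_ (le_of_eq h1.symm)
    refine norm_integral_le_of_norm_le (hi2.const_mul _) ?_
    filter_upwards [hae] with z hz
    exact jInt_diff hH hπ0 hπ2 he hD huv q hz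

lemma InCpi.sub' {u v : EuclideanSpace ℝ (Fin d) → ℝ} (hu : InCpi π u) (hv : InCpi π v) :
    InCpi π (fun q => u q - v q) := by
  obtain ⟨hu, M, hM⟩ := hu
  obtain ⟨hv, N, hN⟩ := hv
  refine ⟨hu.sub hv, M + N, fun q => (abs_sub _ _).trans ?_⟩
  rw [add_mul]; exact add_le_add (hM q) (hN q)

lemma InCpi.sum' {ι : Type*} {s : Finset ι} {u : ι → EuclideanSpace ℝ (Fin d) → ℝ}
    (hu : ∀ i, InCpi π (u i)) : InCpi π (fun q => ∑ i ∈ s, u i q) := by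
  choose h1 M hM using hu
  refine ⟨continuous_finsetSum _ fun i _ => h1 i, ∑ i ∈ s, M i, fun q => ?_⟩
  refine (Finset.abs_sum_le_sum_abs _ _).trans ?_
  rw [Finset.sum_mul]
  exact Finset.sum_le_sum fun i _ => hM i q

end Integral

end Helpers

/-- Existence and uniqueness (Theorem 1 of the paper): the terminal value problem
`W'(t) = F(W(t))` on `[0,T]`, `W(T) = −ℓ_d`, has a unique solution in `C¹([0,T], C_π)`;
equivalently, the integro-differential Hamilton–Jacobi equation with terminal condition
`w(T,·) = −ℓ_d` has a unique classical solution. -/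
theorem HJ_existence_uniqueness (d : ℕ) (hd : 1 ≤ d)
    (Hb Ha : Fin d → ℝ → ℝ) (Lb La : Fin d → NNReal)
    (hHb : ∀ i, LipschitzWith (Lb i) (Hb i)) (hHa : ∀ i, LipschitzWith (La i) (Ha i))
    (μb μa : Fin d → Measure ℝ)
    [∀ i, IsProbabilityMeasure (μb i)] [∀ i, IsProbabilityMeasure (μa i)]
    (hμb0 : ∀ i, μb i (Set.Iic 0) = 0) (hμa0 : ∀ i, μa i (Set.Iic 0) = 0)
    (π : EuclideanSpace ℝ (Fin d) → ℝ) (hπc : Continuous π) (hπ0 : ∀ q, 0 ≤ π q)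
    (p : ℕ) (hp : 1 ≤ p) (C : ℝ) (hC : 0 < C)
    (hπ1 : ∀ q, π q ≤ C * (1 + ‖q‖ ^ p))
    (hπ2 : ∀ q y : EuclideanSpace ℝ (Fin d),
      (1 + π (q + y)) / (1 + π q) ≤ C * (1 + ‖y‖ ^ p))
    (hmomb : ∀ i, Integrable (fun z : ℝ => z ^ p) (μb i))
    (hmoma : ∀ i, Integrable (fun z : ℝ => z ^ p) (μa i))
    (ψ ℓd : EuclideanSpace ℝ (Fin d) → ℝ) (hψ : InCpi π ψ) (hℓd : InCpi π ℓd)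
    (T : ℝ) (hT : 0 < T) :
    ∃ w : ℝ → EuclideanSpace ℝ (Fin d) → ℝ,
      IsHJSolution d T π ψ ℓd Hb Ha μb μa w ∧
      ∀ w' : ℝ → EuclideanSpace ℝ (Fin d) → ℝ,
        IsHJSolution d T π ψ ℓd Hb Ha μb μa w' →
        ∀ t ∈ Set.Icc (0 : ℝ) T, ∀ q, w' t q = w t q := by
  have eb : ∀ i : Fin d, ‖(EuclideanSpace.single i (1 : ℝ))‖ = 1 := fun i => by simp
  have ea : ∀ i : Fin d, ‖-(EuclideanSpace.single i (1 : ℝ))‖ = 1 := fun i => by simp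
  have fb := fun i => jump_facts (hHb i) (hμb0 i) hπc hπ0 hp hC hπ2 (hmomb i) (eb i)
  have fa := fun i => jump_facts (hHa i) (hμa0 i) hπc hπ0 hp hC hπ2 (hmoma i) (ea i)
  choose fb1 Kb fb2 using fb
  choose fa1 Ka fa2 using fa
  have hF : ∀ u q, Fop d ψ Hb Ha μb μa u q = ψ q
      - ∑ i : Fin d, ∫ z : ℝ, jInt (Hb i) (EuclideanSpace.single i (1 : ℝ)) u q z ∂(μb i)
      - ∑ i : Fin d, ∫ z : ℝ, jInt (Ha i) (-(EuclideanSpace.single i (1 : ℝ))) u q z ∂(μa i) := by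
    intro u q
    simp only [Fop, jInt, smul_neg, sub_eq_add_neg]
  refine abstract_exists_unique hπc hπ0 (Fop d ψ Hb Ha μb μa) ?_ (∑ i, Kb i + ∑ i, Ka i) ?_
    (fun q => -ℓd q) ⟨hℓd.1.neg, by simpa using hℓd.2⟩ T hT
  · intro u hu
    have h := (hψ.sub' (InCpi.sum' (s := Finset.univ) fun i => fb1 i u hu)).sub'
      (InCpi.sum' (s := Finset.univ) fun i => fa1 i u hu)
    have h2 : Fop d ψ Hb Ha μb μa u = _ := funext (hF u)
    rw [h2]
    exact h
  · intro u v hu hv D hD huv q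
    rw [hF, hF]
    have sb := Finset.sum_le_sum fun i (_ : i ∈ Finset.univ) => fb2 i u v hu hv D hD huv q
    have sa := Finset.sum_le_sum fun i (_ : i ∈ Finset.univ) => fa2 i u v hu hv D hD huv q
    replace sb := (Finset.abs_sum_le_sum_abs _ _).trans sb
    replace sa := (Finset.abs_sum_le_sum_abs _ _).trans sa
    rw [Finset.sum_sub_distrib, ← Finset.sum_mul, ← Finset.sum_mul] at sa sb
    push_cast
    rw [abs_le] at sa sb ⊢
    constructor <;> linarith [sa.1, sa.2, sb.1, sb.2]
end
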